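/- In the setting below, for every M > 0 there exists a constant C₀ > 0, depending only on p, c₁, c₂, C_U, u₋, u₊, f and M (and not on T), such that whenever ‖φ(0,·)‖_{L²} + sup_{x∈ℝ}|φ(0,x)| ≤ M, then for all t ∈ [0,T]: ‖φ(t)‖²_{L²} + ∫₀^t ∫_ℝ φ(τ,x)²·∂ₓU(τ,x) dx dτ + ∫₀^t ∫_ℝ (1+(∂ₓφ(τ,x))²)^{(p−1)/2}·(∂ₓφ(τ,x))² dx dτ ≤ C₀. -/

import Mathlib

open MeasureTheory Filter Set intervalIntegral

/-- `L²` norm in the space variable. -/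
noncomputable def L2norm (g : ℝ → ℝ) : ℝ := (∫ x : ℝ, (g x) ^ 2) ^ ((1 : ℝ) / 2)

/-!
The sum `U + φ` solves a quasilinear parabolic equation, so the maximum principle confines it to an
interval on which `f''` is bounded below by some `m > 0`. Multiplying the perturbation equation by
`φ` and integrating, convexity produces the coercive term `m ∫ φ² ∂ₓU`, and the lower bound on `σ'`
together with the boundedness of `∂ₓU` produces the viscous dissipation. The only remaining term is
`∫ φ ∂ₓ(σ(∂ₓU))`, at most a constant times `‖φ(t)‖ ‖∂ₓ²U(t)‖`. As `‖∂ₓ²U(t)‖` decays at an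
integrable rate, the energy is bounded by `M² + K sup ‖φ‖`, which closes because it is quadratic in
`‖φ‖`.

That `∂ₓ²U` is square-integrable at all is not implied by a bound on `L2norm`, whose value is `0` on
functions that are not square-integrable. It follows from `|∂ₓ²U| ≤ K ∂ₓU` along characteristics.
-/

open Function Topology

section PartialDerivatives

variable {g : ℝ → ℝ → ℝ}

lemma contDiff_slice_space {n : WithTop ℕ∞} (hg : ContDiff ℝ n (uncurry g)) (t : ℝ) :
    ContDiff ℝ n (g t) :=
  hg.comp (contDiff_const.prodMk contDiff_id)

lemma contDiff_slice_time {n : WithTop ℕ∞} (hg : ContDiff ℝ n (uncurry g)) (x : ℝ) :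
    ContDiff ℝ n fun t => g t x :=
  hg.comp (contDiff_id.prodMk contDiff_const)

lemma contDiff_deriv_space {m n : WithTop ℕ∞} (hg : ContDiff ℝ m (uncurry g)) (hnm : n + 1 ≤ m) :
    ContDiff ℝ n fun q : ℝ × ℝ => deriv (g q.1) q.2 := by
  have huncurried : ContDiff ℝ m (uncurry fun (q : ℝ × ℝ) y => g q.1 y) :=
    hg.comp (contDiff_fst.fst.prodMk contDiff_snd)
  exact huncurried.fderiv_apply contDiff_snd contDiff_const hnm

lemma contDiff_deriv_time {m n : WithTop ℕ∞} (hg : ContDiff ℝ m (uncurry g)) (hnm : n + 1 ≤ m) :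
    ContDiff ℝ n fun q : ℝ × ℝ => deriv (fun s => g s q.2) q.1 :=
  have hswap : ContDiff ℝ m (uncurry fun x t => g t x) := hg.comp (contDiff_snd.prodMk contDiff_fst)
  (contDiff_deriv_space hswap hnm).comp (contDiff_snd.prodMk contDiff_fst)

lemma hasDerivAt_along_line (hg : Differentiable ℝ (uncurry g)) (t x a s : ℝ) :
    HasDerivAt (fun s => g (t + s) (x + a * s))
      (deriv (fun r => g r (x + a * s)) (t + s) + a * deriv (g (t + s)) (x + a * s)) s := by
  have hfderiv := (hg (t + s, x + a * s)).hasFDerivAt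
  have htime := hfderiv.comp_hasDerivAt (f := fun r => (r, x + a * s)) (t + s)
    ((hasDerivAt_id _).prodMk (hasDerivAt_const _ _))
  have hspace := hfderiv.comp_hasDerivAt (f := fun y => (t + s, y)) (x + a * s)
    ((hasDerivAt_const _ _).prodMk (hasDerivAt_id _))
  have hline : HasDerivAt (fun s : ℝ => (t + s, x + a * s)) (1, a) s :=
    ((hasDerivAt_id s).const_add t).prodMk
      (by simpa using ((hasDerivAt_id s).const_mul a).const_add x)
  have hsplit : ((1, a) : ℝ × ℝ) = (1, 0) + a • (0, 1) := by simp
  have hchain := hfderiv.comp_hasDerivAt s hline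
  rw [hsplit, map_add, map_smul, smul_eq_mul] at hchain
  rw [show deriv (fun r => g r (x + a * s)) (t + s) = _ from htime.deriv,
    show deriv (g (t + s)) (x + a * s) = _ from hspace.deriv]
  exact hchain

end PartialDerivatives

section MaximumPrinciple

lemma deriv_deriv_nonpos_of_isLocalMax {g : ℝ → ℝ} {x : ℝ} (hmax : IsLocalMax g x)
    (hg : ContinuousAt g x) : deriv (deriv g) x ≤ 0 := by
  by_contra! hpos
  have hmin : IsLocalMin g x := isLocalMin_of_deriv_deriv_pos hpos hmax.deriv_eq_zero hg
  have hconst : g =ᶠ[𝓝 x] fun _ => g x := by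
    filter_upwards [hmax, hmin] with y hle hge using le_antisymm hle hge
  have hzero : deriv (deriv g) x = 0 := by simpa using hconst.deriv.deriv_eq
  exact hpos.ne' hzero

lemma deriv_nonneg_of_isMaxOn_Icc {g : ℝ → ℝ} {a b t : ℝ} (hmax : IsMaxOn g (Icc a b) t)
    (ht : t ∈ Ioc a b) (hg : DifferentiableAt ℝ g t) : 0 ≤ deriv g t := by
  have hseg : segment ℝ t a ⊆ Icc a b := by
    rw [segment_symm, segment_eq_Icc ht.1.le]
    exact Icc_subset_Icc_right ht.2
  have hle := hmax.localize.hasFDerivWithinAt_nonpos hg.hasDerivAt.hasFDerivAt.hasFDerivWithinAt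
    (sub_mem_posTangentConeAt_of_segment_subset hseg)
  have hprod : (a - t) * deriv g t ≤ 0 := by simpa using hle
  exact nonneg_of_mul_nonpos_right hprod (sub_neg.2 ht.1)

lemma exists_isMaxOn_strip {w : ℝ × ℝ → ℝ} {T N δ : ℝ} (hw : Continuous w) (hT : 0 ≤ T)
    (hδ : 0 < δ) (hle : ∀ q ∈ Icc 0 T ×ˢ univ, w q ≤ N - δ * q.2 ^ 2) :
    ∃ q ∈ Icc 0 T ×ˢ univ, IsMaxOn w (Icc 0 T ×ˢ univ) q := by
  have horigin : ((0 : ℝ), (0 : ℝ)) ∈ Icc 0 T ×ˢ univ := ⟨left_mem_Icc.2 hT, mem_univ _⟩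
  refine hw.continuousOn.exists_isMaxOn' (isClosed_Icc.prod isClosed_univ) horigin ?_
  set R := 1 + (N - w (0, 0)) / δ with hR
  have hcompact : IsCompact (Icc 0 T ×ˢ Icc (-R) R) := isCompact_Icc.prod isCompact_Icc
  filter_upwards [mem_inf_of_left hcompact.compl_mem_cocompact,
    mem_inf_of_right (mem_principal_self _)] with q hout hq
  have hR1 : 1 ≤ R := by
    have : w (0, 0) ≤ N := by simpa using hle _ horigin
    exact le_add_of_nonneg_right (div_nonneg (by linarith) hδ.le)
  have hfar : R ≤ |q.2| := by
    by_contra! hlt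
    exact hout ⟨hq.1, abs_le.1 hlt.le⟩
  have hRsq : R ≤ q.2 ^ 2 := by
    rw [← sq_abs]; nlinarith
  have hδR : δ * R = δ + (N - w (0, 0)) := by rw [hR]; field_simp
  nlinarith [hle q hq]

lemma deriv_eq_and_deriv_deriv_le_of_quadratic_touching {g : ℝ → ℝ} {e x₀ : ℝ}
    (hg : ContDiff ℝ 2 g) (hmax : ∀ y, g y - e * (1 + y ^ 2) ≤ g x₀ - e * (1 + x₀ ^ 2)) :
    deriv g x₀ = 2 * e * x₀ ∧ deriv (deriv g) x₀ ≤ 2 * e := by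
  have hlocal : IsLocalMax (fun y => g y - e * (1 + y ^ 2)) x₀ := Eventually.of_forall hmax
  have hderiv : ∀ y, HasDerivAt (fun y => g y - e * (1 + y ^ 2)) (deriv g y - 2 * e * y) y := by
    intro y
    have hquad : HasDerivAt (fun y : ℝ => e * (1 + y ^ 2)) (2 * e * y) y :=
      (((hasDerivAt_pow 2 y).const_add 1).const_mul e).congr_deriv (by push_cast; ring)
    exact (hg.differentiable (by simp) y).hasDerivAt.sub hquad
  have hderiv_eq : deriv (fun y => g y - e * (1 + y ^ 2)) = fun y => deriv g y - 2 * e * y :=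
    funext fun y => (hderiv y).deriv
  have hderiv2 : HasDerivAt (fun y => deriv g y - 2 * e * y) (deriv (deriv g) x₀ - 2 * e) x₀ := by
    have hlin := (hasDerivAt_id x₀).const_mul (2 * e)
    exact ((hg.differentiable_deriv_two x₀).hasDerivAt.sub hlin).congr_deriv (by rw [mul_one])
  constructor
  · linarith [hlocal.hasDerivAt_eq_zero (hderiv x₀)]
  · have hsecond := deriv_deriv_nonpos_of_isLocalMax hlocal (hderiv x₀).continuousAt
    rw [hderiv_eq, hderiv2.deriv] at hsecond
    linarith

lemma parabolic_operator_lt_of_quadratic_touching {g : ℝ → ℝ} {a b L c e x₀ : ℝ}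
    (hg : ContDiff ℝ 2 g) (hmax : ∀ y, g y - e * (1 + y ^ 2) ≤ g x₀ - e * (1 + x₀ ^ 2))
    (ha : |a| ≤ L) (hb : b ∈ Icc 0 c) (he : 0 < e) :
    a * deriv g x₀ + b * deriv (deriv g) x₀ < (L + 2 * c + 1) * e * (1 + x₀ ^ 2) := by
  obtain ⟨hfirst, hsecond⟩ := deriv_eq_and_deriv_deriv_le_of_quadratic_touching hg hmax
  have hdrift : a * (2 * x₀) ≤ L * (1 + x₀ ^ 2) :=
    calc a * (2 * x₀) ≤ |a| * |2 * x₀| := abs_mul a _ ▸ le_abs_self _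
      _ ≤ L * (1 + x₀ ^ 2) := mul_le_mul ha
        (abs_le.2 ⟨by nlinarith [sq_nonneg (x₀ + 1)], by nlinarith [sq_nonneg (x₀ - 1)]⟩)
        (abs_nonneg _) ((abs_nonneg a).trans ha)
  have hdiffusion : b * deriv (deriv g) x₀ ≤ 2 * c * e * (1 + x₀ ^ 2) :=
    calc b * deriv (deriv g) x₀
      _ ≤ b * (2 * e) := mul_le_mul_of_nonneg_left hsecond hb.1
      _ ≤ c * (2 * e) := mul_le_mul_of_nonneg_right hb.2 (by positivity)
      _ ≤ 2 * c * e * (1 + x₀ ^ 2) := by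
        nlinarith [mul_nonneg (mul_nonneg (hb.1.trans hb.2) he.le) (sq_nonneg x₀)]
  rw [hfirst]
  nlinarith [mul_pos he (show 0 < 1 + x₀ ^ 2 by positivity)]

lemma exp_growth_le_deriv_of_isMaxOn {g : ℝ → ℝ} {C γ T t₀ : ℝ} (hg : DifferentiableAt ℝ g t₀)
    (ht₀ : t₀ ∈ Ioc 0 T) (hmax : IsMaxOn (fun s => g s - C * Real.exp (γ * s)) (Icc 0 T) t₀) :
    γ * (C * Real.exp (γ * t₀)) ≤ deriv g t₀ := by
  have hexp : HasDerivAt (fun s => C * Real.exp (γ * s)) (γ * (C * Real.exp (γ * t₀))) t₀ :=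
    (((hasDerivAt_id t₀).const_mul γ).exp.const_mul C).congr_deriv (by simp only [id]; ring)
  have hdiff := hg.hasDerivAt.sub hexp
  have hnonneg := deriv_nonneg_of_isMaxOn_Icc hmax ht₀ hdiff.differentiableAt
  exact sub_nonneg.1 (hdiff.deriv ▸ hnonneg)

lemma le_add_barrier_of_parabolic_subsolution {u a b : ℝ → ℝ → ℝ} {T L c N K δ : ℝ}
    (hu : ContDiff ℝ 2 (uncurry u)) (ha : ∀ t ∈ Icc 0 T, ∀ x, |a t x| ≤ L)
    (hb : ∀ t ∈ Icc 0 T, ∀ x, b t x ∈ Icc 0 c)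
    (hsub : ∀ t ∈ Icc 0 T, ∀ x,
      deriv (fun s => u s x) t ≤ a t x * deriv (u t) x + b t x * deriv (deriv (u t)) x)
    (hbdd : ∀ t ∈ Icc 0 T, ∀ x, u t x ≤ N) (hinit : ∀ x, u 0 x ≤ K) (hδ : 0 < δ) :
    ∀ t ∈ Icc 0 T, ∀ x, u t x ≤ K + δ * Real.exp ((L + 2 * c + 1) * t) * (1 + x ^ 2) := by
  intro t ht x
  have hL : 0 ≤ L := (abs_nonneg _).trans (ha t ht x)
  have hc : 0 ≤ c := (hb t ht x).1.trans (hb t ht x).2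
  set growth := L + 2 * c + 1
  set E : ℝ → ℝ := fun t => δ * Real.exp (growth * t) with hE
  have hEδ : ∀ s, 0 ≤ s → δ ≤ E s := fun s hs =>
    le_mul_of_one_le_right hδ.le (Real.one_le_exp (by positivity))
  have hw : Continuous fun q : ℝ × ℝ => u q.1 q.2 - E q.1 * (1 + q.2 ^ 2) := by
    have := hu.continuous
    fun_prop
  have hupper : ∀ q ∈ Icc 0 T ×ˢ univ, u q.1 q.2 - E q.1 * (1 + q.2 ^ 2) ≤ N - δ * q.2 ^ 2 := by
    intro q hq
    nlinarith [hbdd q.1 hq.1 q.2, hEδ q.1 hq.1.1, sq_nonneg q.2]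
  obtain ⟨⟨t₀, x₀⟩, ⟨ht₀, -⟩, hmax⟩ := exists_isMaxOn_strip hw (ht.1.trans ht.2) hδ hupper
  have hmax_le : ∀ s ∈ Icc 0 T, ∀ y,
      u s y - E s * (1 + y ^ 2) ≤ u t₀ x₀ - E t₀ * (1 + x₀ ^ 2) :=
    fun s hs y => hmax (show (s, y) ∈ Icc 0 T ×ˢ univ from ⟨hs, mem_univ y⟩)
  suffices hinitial : t₀ = 0 by
    have := hmax_le t ht x
    rw [hinitial] at this
    nlinarith [hinit x₀, hEδ 0 le_rfl, sq_nonneg x₀]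
  by_contra hne
  have hpos : 0 < t₀ := lt_of_le_of_ne ht₀.1 (Ne.symm hne)
  have htime : growth * (δ * (1 + x₀ ^ 2) * Real.exp (growth * t₀)) ≤ deriv (fun s => u s x₀) t₀ :=
    exp_growth_le_deriv_of_isMaxOn ((contDiff_slice_time hu x₀).differentiable (by simp) t₀)
      ⟨hpos, ht₀.2⟩ fun s hs => by
        simpa only [mem_ofPred_eq, hE, mul_right_comm δ] using hmax_le s hs x₀
  have hspace := parabolic_operator_lt_of_quadratic_touching (contDiff_slice_space hu t₀)
    (hmax_le t₀ ht₀) (ha t₀ ht₀ x₀) (hb t₀ ht₀ x₀) (hδ.trans_le (hEδ t₀ ht₀.1))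
  refine lt_irrefl _ (((hsub t₀ ht₀ x₀).trans_lt hspace).trans_le (htime.trans_eq' ?_))
  ring

lemma le_of_parabolic_subsolution {u a b : ℝ → ℝ → ℝ} {T L c N K : ℝ}
    (hu : ContDiff ℝ 2 (uncurry u)) (ha : ∀ t ∈ Icc 0 T, ∀ x, |a t x| ≤ L)
    (hb : ∀ t ∈ Icc 0 T, ∀ x, b t x ∈ Icc 0 c)
    (hsub : ∀ t ∈ Icc 0 T, ∀ x,
      deriv (fun s => u s x) t ≤ a t x * deriv (u t) x + b t x * deriv (deriv (u t)) x)
    (hbdd : ∀ t ∈ Icc 0 T, ∀ x, u t x ≤ N) (hinit : ∀ x, u 0 x ≤ K) :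
    ∀ t ∈ Icc 0 T, ∀ x, u t x ≤ K := by
  intro t ht x
  have hlim : Tendsto (fun δ => K + δ * Real.exp ((L + 2 * c + 1) * t) * (1 + x ^ 2))
      (𝓝[>] 0) (𝓝 K) := by
    refine tendsto_nhdsWithin_of_tendsto_nhds (Continuous.tendsto' (by fun_prop) _ _ (by simp))
  exact ge_of_tendsto hlim (eventually_mem_nhdsWithin.mono fun δ hδ =>
    le_add_barrier_of_parabolic_subsolution hu ha hb hsub hbdd hinit hδ t ht x)

lemma mem_Icc_of_parabolic_solution {u a b : ℝ → ℝ → ℝ} {T L c N A B : ℝ}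
    (hu : ContDiff ℝ 2 (uncurry u)) (ha : ∀ t ∈ Icc 0 T, ∀ x, |a t x| ≤ L)
    (hb : ∀ t ∈ Icc 0 T, ∀ x, b t x ∈ Icc 0 c)
    (hsol : ∀ t ∈ Icc 0 T, ∀ x,
      deriv (fun s => u s x) t = a t x * deriv (u t) x + b t x * deriv (deriv (u t)) x)
    (hbdd : ∀ t ∈ Icc 0 T, ∀ x, |u t x| ≤ N) (hinit : ∀ x, u 0 x ∈ Icc A B) :
    ∀ t ∈ Icc 0 T, ∀ x, u t x ∈ Icc A B := by
  intro t ht x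
  have hsol_neg : ∀ t ∈ Icc 0 T, ∀ x, deriv (fun s => -u s x) t ≤
      a t x * deriv (fun y => -u t y) x + b t x * deriv (deriv fun y => -u t y) x := by
    intro t ht x
    simp only [deriv.fun_neg', deriv.fun_neg, hsol t ht x]
    linarith
  constructor
  · exact neg_le_neg_iff.1 (le_of_parabolic_subsolution (u := fun t x => -u t x) hu.neg ha hb
      hsol_neg (fun t ht x => (neg_le_abs _).trans (hbdd t ht x))
      (fun x => neg_le_neg (hinit x).1) t ht x)
  · exact le_of_parabolic_subsolution hu ha hb (fun t ht x => (hsol t ht x).le)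
      (fun t ht x => (le_abs_self _).trans (hbdd t ht x)) (fun x => (hinit x).2) t ht x

end MaximumPrinciple

section Characteristics

/-- An increasing solution `U` of `∂ₜU + ∂ₓf(U) = 0` on `[0, ∞) × ℝ` with values in `[um, up]`:
a smoothed rarefaction wave, with slope at most `C` and with `∂ₓ²U` decaying at rate `r` in `L²`. -/
structure IsSmoothedRarefaction (f : ℝ → ℝ) (um up C r : ℝ) (U : ℝ → ℝ → ℝ) : Prop where
  contDiff : ContDiff ℝ 2 (uncurry U)
  conservation_law : ∀ t, 0 ≤ t → ∀ x,
    deriv (fun s => U s x) t + deriv (fun y => f (U t y)) x = 0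
  mem_Icc : ∀ t, 0 ≤ t → ∀ x, U t x ∈ Icc um up
  deriv_pos : ∀ t, 0 ≤ t → ∀ x, 0 < deriv (U t) x
  deriv_le : ∀ t, 0 ≤ t → ∀ x, deriv (U t) x ≤ C
  abs_deriv_deriv_le : ∀ t, 0 ≤ t → ∀ x, |deriv (deriv (U t)) x| ≤ C * (1 + t)⁻¹
  L2norm_deriv_deriv_le : ∀ t, 0 ≤ t → L2norm (deriv (deriv (U t))) ≤ C * (1 + t) ^ (-r)

lemma integrable_deriv_of_monotone_of_bounded {g : ℝ → ℝ} {a b : ℝ} (hg : ContDiff ℝ 1 g)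
    (hmono : ∀ x, 0 ≤ deriv g x) (hbdd : ∀ x, g x ∈ Icc a b) : Integrable (deriv g) := by
  have hcont : Continuous (deriv g) := hg.continuous_deriv le_rfl
  refine integrable_of_intervalIntegral_norm_bounded (l := atTop) (a := fun R : ℝ => -R) (b := id)
    (b - a) (fun R => hcont.integrableOn_Icc.mono_set Ioc_subset_Icc_self)
    tendsto_neg_atTop_atBot tendsto_id (Eventually.of_forall fun R => ?_)
  calc ∫ x in (-R)..R, ‖deriv g x‖ = ∫ x in (-R)..R, deriv g x := by
        simp only [Real.norm_of_nonneg (hmono _)]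
    _ = g R - g (-R) := integral_deriv_eq_sub (fun x _ => hg.differentiable (by simp) x)
        (hcont.intervalIntegrable _ _)
    _ ≤ b - a := sub_le_sub (hbdd R).2 (hbdd (-R)).1

lemma deriv_deriv_eq_of_constant_along_characteristics {h V W : ℝ → ℝ} {s : ℝ}
    (hh : ContDiff ℝ 2 h) (hV : ContDiff ℝ 2 V) (hW : ContDiff ℝ 2 W)
    (htransport : ∀ y, W (y + s * h (V y)) = V y) (x : ℝ) :
    deriv (deriv V) x =
      (1 + s * (deriv h (V x) * deriv V x)) ^ 3 * deriv (deriv W) (x + s * h (V x))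
        + s * deriv (deriv h) (V x) * deriv V x ^ 3 := by
  set X : ℝ → ℝ := fun y => y + s * h (V y)
  set X' : ℝ → ℝ := fun y => 1 + s * (deriv h (V y) * deriv V y)
  have hV1 : ∀ y, HasDerivAt V (deriv V y) y := fun y => (hV.differentiable (by simp) y).hasDerivAt
  have hV2 := (hV.differentiable_deriv_two x).hasDerivAt
  have hX : ∀ y, HasDerivAt X (X' y) y := fun y =>
    (hasDerivAt_id y).add (((hh.differentiable (by simp) _).hasDerivAt.comp y (hV1 y)).const_mul s)
  have hX' : HasDerivAt X' (s * (deriv (deriv h) (V x) * deriv V x * deriv V x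
      + deriv h (V x) * deriv (deriv V) x)) x :=
    ((((hh.differentiable_deriv_two _).hasDerivAt.comp x (hV1 x)).mul hV2).const_mul s).const_add 1
  have hfirst : ∀ y, deriv W (X y) * X' y = deriv V y := fun y =>
    ((hW.differentiable (by simp) _).hasDerivAt.comp y (hX y)).unique
      ((hV1 y).congr_of_eventuallyEq (Eventually.of_forall htransport))
  have hsecond : deriv (deriv W) (X x) * X' x * X' x + deriv W (X x) *
      (s * (deriv (deriv h) (V x) * deriv V x * deriv V x + deriv h (V x) * deriv (deriv V) x))
        = deriv (deriv V) x :=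
    (((hW.differentiable_deriv_two _).hasDerivAt.comp x (hX x)).mul hX').unique
      (hV2.congr_of_eventuallyEq (Eventually.of_forall hfirst))
  have hx := hfirst x
  simp only [X'] at hsecond hx ⊢
  linear_combination (-(1 + s * (deriv h (V x) * deriv V x))) * hsecond
    + s * (deriv (deriv h) (V x) * deriv V x ^ 2 + deriv h (V x) * deriv (deriv V) x) * hx

namespace IsSmoothedRarefaction

variable {f : ℝ → ℝ} {um up C r : ℝ} {U : ℝ → ℝ → ℝ}

lemma deriv_time_eq (hU : IsSmoothedRarefaction f um up C r U) (hf : Differentiable ℝ f) {t : ℝ}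
    (ht : 0 ≤ t) (x : ℝ) : deriv (fun s => U s x) t = -(deriv f (U t x) * deriv (U t) x) := by
  have hslice : DifferentiableAt ℝ (U t) x :=
    (contDiff_slice_space hU.contDiff t).differentiable (by simp) x
  have hchain := ((hf (U t x)).hasDerivAt.comp x hslice.hasDerivAt).deriv
  have hlaw := hU.conservation_law t ht x
  rw [show deriv (fun y => f (U t y)) x = _ from hchain] at hlaw
  linarith

lemma eq_along_characteristic (hU : IsSmoothedRarefaction f um up C r U) (hf : ContDiff ℝ 2 f)
    {t s : ℝ} (ht : 0 ≤ t) (hs : 0 ≤ s) (x : ℝ) :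
    U (t + s) (x + deriv f (U t x) * s) = U t x := by
  obtain ⟨K, hK⟩ := (hf.deriv' : ContDiff ℝ 1 (deriv f)).contDiffOn.exists_lipschitzOnWith
    one_ne_zero (convex_Icc um up) isCompact_Icc
  set a := deriv f (U t x)
  have hline := hasDerivAt_along_line (hU.contDiff.differentiable (by simp)) t x a
  have hzero : ∀ τ ∈ Icc 0 s, U (t + τ) (x + a * τ) - U t x = 0 := by
    refine eq_zero_of_abs_deriv_le_mul_abs_self_of_eq_zero_right (K := K * C)
      (fun τ _ => ((hline τ).sub_const _).continuousAt.continuousWithinAt)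
      (fun τ _ => ((hline τ).sub_const _).hasDerivWithinAt) (by simp) fun τ hτ => ?_
    have htτ : 0 ≤ t + τ := add_nonneg ht hτ.1
    set y := x + a * τ
    have hfactor : deriv (fun r => U r y) (t + τ) + a * deriv (U (t + τ)) y
        = (a - deriv f (U (t + τ) y)) * deriv (U (t + τ)) y := by
      rw [hU.deriv_time_eq (hf.differentiable (by simp)) htτ]
      ring
    have hlip : |a - deriv f (U (t + τ) y)| ≤ K * |U (t + τ) y - U t x| := by
      rw [abs_sub_comm]
      exact hK.norm_sub_le (hU.mem_Icc _ htτ y) (hU.mem_Icc t ht x)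
    rw [hfactor, Real.norm_eq_abs, Real.norm_eq_abs, abs_mul, abs_of_pos (hU.deriv_pos _ htτ y)]
    calc |a - deriv f (U (t + τ) y)| * deriv (U (t + τ)) y
        ≤ K * |U (t + τ) y - U t x| * C :=
          mul_le_mul hlip (hU.deriv_le _ htτ y) (hU.deriv_pos _ htτ y).le (by positivity)
      _ = K * C * |U (t + τ) y - U t x| := by ring
  exact sub_eq_zero.1 (hzero s ⟨hs, le_rfl⟩)

/-- Following the characteristic through `(t, x)` for the time `(∂ₓU)⁻¹` multiplies `∂ₓU` and
`∂ₓ²U` only by bounded factors, while the a priori bound on `∂ₓ²U` has dropped to order `∂ₓU`. -/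
lemma abs_deriv_deriv_le_mul_deriv (hU : IsSmoothedRarefaction f um up C r U)
    (hf : ContDiff ℝ 3 f) (hconv : ∀ u, 0 ≤ deriv (deriv f) u) {t : ℝ} (ht : 0 ≤ t) (x : ℝ) :
    |deriv (deriv (U t)) x| ≤ ((1 + deriv (deriv f) (U t x)) ^ 3 * C
      + |deriv (deriv (deriv f)) (U t x)| * deriv (U t) x) * deriv (U t) x := by
  set z := deriv (U t) x
  set k := deriv (deriv f) (U t x)
  set m := deriv (deriv (deriv f)) (U t x)
  have hz : 0 < z := hU.deriv_pos t ht x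
  have hk : 0 ≤ k := hconv _
  have hC : 0 ≤ C := hz.le.trans (hU.deriv_le t ht x)
  have htransport : ∀ y, U (t + z⁻¹) (y + z⁻¹ * deriv f (U t y)) = U t y := fun y => by
    rw [mul_comm]
    exact hU.eq_along_characteristic (hf.of_le (by norm_num)) ht (inv_pos.2 hz).le y
  have hW : |deriv (deriv (U (t + z⁻¹))) (x + z⁻¹ * deriv f (U t x))| ≤ C * z := by
    refine (hU.abs_deriv_deriv_le _ (by positivity) _).trans (mul_le_mul_of_nonneg_left ?_ hC)
    exact inv_le_of_inv_le₀ hz (by linarith)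
  have hidentity := deriv_deriv_eq_of_constant_along_characteristics hf.deriv'
    (contDiff_slice_space hU.contDiff t) (contDiff_slice_space hU.contDiff (t + z⁻¹)) htransport x
  have hstretch : 1 + z⁻¹ * (k * z) = 1 + k := by field_simp
  have hcurve : z⁻¹ * m * z ^ 3 = m * z ^ 2 := by field_simp
  rw [hidentity, hstretch, hcurve]
  calc |(1 + k) ^ 3 * deriv (deriv (U (t + z⁻¹))) (x + z⁻¹ * deriv f (U t x)) + m * z ^ 2|
      ≤ (1 + k) ^ 3 * |deriv (deriv (U (t + z⁻¹))) (x + z⁻¹ * deriv f (U t x))| + |m| * z ^ 2 := by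
        refine (abs_add_le _ _).trans_eq ?_
        rw [abs_mul, abs_mul, abs_of_nonneg (by positivity : 0 ≤ (1 + k) ^ 3), abs_sq]
    _ ≤ (1 + k) ^ 3 * (C * z) + |m| * z ^ 2 := by gcongr
    _ = ((1 + k) ^ 3 * C + |m| * z) * z := by ring

lemma integrable_sq_deriv_deriv (hU : IsSmoothedRarefaction f um up C r U) (hf : ContDiff ℝ 3 f)
    (hconv : ∀ u, 0 ≤ deriv (deriv f) u) {t : ℝ} (ht : 0 ≤ t) :
    Integrable fun x => deriv (deriv (U t)) x ^ 2 := by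
  have hslice : ContDiff ℝ 2 (U t) := contDiff_slice_space hU.contDiff t
  have hC : 0 ≤ C := (hU.deriv_pos t ht 0).le.trans (hU.deriv_le t ht 0)
  have hf3 : ContDiff ℝ 0 (deriv (deriv (deriv f))) := hf.deriv'.deriv'.deriv'
  have hf2 : ContDiff ℝ 1 (deriv (deriv f)) := hf.deriv'.deriv'
  obtain ⟨K, hK⟩ := isCompact_Icc.exists_bound_of_continuousOn (s := Icc um up)
    (f := fun u => (1 + deriv (deriv f) u) ^ 3 * C + |deriv (deriv (deriv f)) u| * C)
    (by have := hf3.continuous; have := hf2.continuous; fun_prop)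
  have hslope : ∀ x, |deriv (deriv (U t)) x| ≤ K * deriv (U t) x := fun x => by
    refine (hU.abs_deriv_deriv_le_mul_deriv hf hconv ht x).trans
      (mul_le_mul_of_nonneg_right ?_ (hU.deriv_pos t ht x).le)
    refine le_trans ?_ ((le_abs_self _).trans (hK _ (hU.mem_Icc t ht x)))
    gcongr
    exact hU.deriv_le t ht x
  have hbdd : ∀ x, |deriv (deriv (U t)) x| ≤ C := fun x =>
    (hU.abs_deriv_deriv_le t ht x).trans
      (mul_le_of_le_one_right hC (inv_le_one_of_one_le₀ (by linarith)))
  have hintegrable : Integrable (deriv (U t)) :=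
    integrable_deriv_of_monotone_of_bounded (hslice.of_le one_le_two)
      (fun x => (hU.deriv_pos t ht x).le) (hU.mem_Icc t ht)
  have hcont : Continuous (deriv (deriv (U t))) :=
    (hslice.deriv' : ContDiff ℝ 1 _).continuous_deriv le_rfl
  refine (hintegrable.const_mul (C * K)).mono' (hcont.pow 2).aestronglyMeasurable
    (Eventually.of_forall fun x => ?_)
  rw [Real.norm_of_nonneg (sq_nonneg _), ← sq_abs, sq, mul_assoc]
  exact mul_le_mul (hbdd x) (hslope x) (abs_nonneg _) hC

end IsSmoothedRarefaction

end Characteristics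

section PointwiseEstimates

/-- The second-order Taylor remainder of the flux `f` at `a`: the part of the flux perturbation
that the convexity of `f` controls. -/
noncomputable def relativeFlux (f : ℝ → ℝ) (a h : ℝ) : ℝ := f (a + h) - f a - deriv f a * h

/-- A viscosity whose slope is comparable to `(1 + v²)^((p - 1) / 2)`. -/
structure IsPseudoplastic (p c₁ c₂ : ℝ) (σ : ℝ → ℝ) : Prop where
  contDiff : ContDiff ℝ 1 σ
  lower_bound : ∀ v, c₁ * (1 + v ^ 2) ^ ((p - 1) / 2) ≤ deriv σ v
  upper_bound : ∀ v, deriv σ v ≤ c₂ * (1 + v ^ 2) ^ ((p - 1) / 2)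

/-- The dissipation density `(1 + v²)^((p - 1) / 2) v²` of a pseudoplastic viscosity. -/
noncomputable def dissipation (p v : ℝ) : ℝ := (1 + v ^ 2) ^ ((p - 1) / 2) * v ^ 2

lemma exists_sub_eq_deriv_mul {g : ℝ → ℝ} (hg : ContDiff ℝ 1 g) (a h : ℝ) :
    ∃ ξ ∈ uIcc a (a + h), g (a + h) - g a = deriv g ξ * h := by
  obtain rfl | hh := eq_or_ne h 0
  · exact ⟨a, left_mem_uIcc, by simp⟩
  obtain ⟨ξ, hξ, hrem⟩ := taylor_mean_remainder_lagrange_iteratedDeriv (n := 0) (f := g)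
    (x₀ := a) (x := a + h) (by simpa using hh) (by simpa using hg.contDiffOn)
  exact ⟨ξ, Ioo_subset_Icc_self hξ, by simpa using hrem⟩

lemma exists_relativeFlux_eq {f : ℝ → ℝ} (hf : ContDiff ℝ 2 f) (a h : ℝ) :
    ∃ ξ ∈ uIcc a (a + h), relativeFlux f a h = deriv (deriv f) ξ * h ^ 2 / 2 := by
  obtain rfl | hh := eq_or_ne h 0
  · exact ⟨a, left_mem_uIcc, by simp [relativeFlux]⟩
  have hne : a ≠ a + h := by simpa using hh
  obtain ⟨ξ, hξ, hrem⟩ := taylor_mean_remainder_lagrange_iteratedDeriv (n := 1) hne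
    (hf.contDiffOn.of_le (by norm_num))
  refine ⟨ξ, Ioo_subset_Icc_self hξ, ?_⟩
  have hderiv : derivWithin f (uIcc a (a + h)) a = deriv f a :=
    (hf.differentiable (by simp) a).derivWithin (uniqueDiffOn_uIcc hne a left_mem_uIcc)
  simp only [taylorWithinEval_succ, taylor_within_zero_eval, CharP.cast_eq_zero, zero_add,
    Nat.factorial_zero, Nat.cast_one, mul_one, inv_one, add_sub_cancel_left, pow_one, one_mul,
    iteratedDerivWithin_one, hderiv, smul_eq_mul, Nat.reduceAdd, iteratedDeriv_succ,
    iteratedDeriv_zero, Nat.factorial_two, Nat.cast_ofNat] at hrem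
  rw [relativeFlux]
  linarith

variable {f : ℝ → ℝ} {A B a h : ℝ}

lemma abs_relativeFlux_le {L : ℝ} (hf : ContDiff ℝ 2 f)
    (hL : ∀ u ∈ Icc A B, |deriv (deriv f) u| ≤ L) (ha : a ∈ Icc A B) (hah : a + h ∈ Icc A B) :
    |relativeFlux f a h| ≤ L * h ^ 2 := by
  obtain ⟨ξ, hξ, hrem⟩ := exists_relativeFlux_eq hf a h
  have hbound := hL ξ (uIcc_subset_Icc ha hah hξ)
  rw [hrem, abs_div, abs_mul, abs_sq, abs_two]
  nlinarith [sq_nonneg h, abs_nonneg (deriv (deriv f) ξ)]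

lemma le_relativeFlux {m : ℝ} (hf : ContDiff ℝ 2 f)
    (hm : ∀ u ∈ Icc A B, m ≤ deriv (deriv f) u) (ha : a ∈ Icc A B) (hah : a + h ∈ Icc A B) :
    m / 2 * h ^ 2 ≤ relativeFlux f a h := by
  obtain ⟨ξ, hξ, hrem⟩ := exists_relativeFlux_eq hf a h
  rw [hrem]
  nlinarith [hm ξ (uIcc_subset_Icc ha hah hξ), sq_nonneg h]

lemma continuous_dissipation (p : ℝ) : Continuous (dissipation p) := by
  unfold dissipation
  exact ((by fun_prop : Continuous fun v : ℝ => 1 + v ^ 2).rpow_const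
    fun v => Or.inl (by positivity)).mul (continuous_pow 2)

lemma dissipation_nonneg (p v : ℝ) : 0 ≤ dissipation p v := by
  unfold dissipation
  positivity

lemma dissipation_le_sq {p : ℝ} (hp : p ≤ 1) (v : ℝ) : dissipation p v ≤ v ^ 2 :=
  mul_le_of_le_one_left (sq_nonneg v)
    (Real.rpow_le_one_of_one_le_of_nonpos (by nlinarith [sq_nonneg v]) (by linarith))

namespace IsPseudoplastic

variable {p c₁ c₂ : ℝ} {σ : ℝ → ℝ}

lemma upper_constant_pos (hσ : IsPseudoplastic p c₁ c₂ σ) (hc₁ : 0 < c₁) : 0 < c₂ := by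
  have hle := (hσ.lower_bound 0).trans (hσ.upper_bound 0)
  norm_num at hle
  exact hc₁.trans_le hle

lemma deriv_mem_Icc (hσ : IsPseudoplastic p c₁ c₂ σ) (hp : p ≤ 1) (hc₁ : 0 < c₁) (v : ℝ) :
    deriv σ v ∈ Icc 0 c₂ := by
  refine ⟨le_trans (by positivity) (hσ.lower_bound v),
    (hσ.upper_bound v).trans (mul_le_of_le_one_right (hσ.upper_constant_pos hc₁).le ?_)⟩
  exact Real.rpow_le_one_of_one_le_of_nonpos (by nlinarith [sq_nonneg v]) (by linarith)

lemma abs_sub_le (hσ : IsPseudoplastic p c₁ c₂ σ) (hp : p ≤ 1) (hc₁ : 0 < c₁)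
    (a v : ℝ) : |σ (a + v) - σ a| ≤ c₂ * |v| := by
  obtain ⟨ξ, -, hmean⟩ := exists_sub_eq_deriv_mul hσ.contDiff a v
  obtain ⟨hnonneg, hle⟩ := hσ.deriv_mem_Icc hp hc₁ ξ
  rw [hmean, abs_mul, abs_of_nonneg hnonneg]
  exact mul_le_mul_of_nonneg_right hle (abs_nonneg v)

lemma mul_dissipation_le (hσ : IsPseudoplastic p c₁ c₂ σ) (hp : p ≤ 1) (hc₁ : 0 < c₁) {C : ℝ}
    (ha : |a| ≤ C) (v : ℝ) :
    c₁ * (2 * (1 + C ^ 2)) ^ ((p - 1) / 2) * dissipation p v ≤ v * (σ (a + v) - σ a) := by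
  obtain ⟨ξ, hξ, hmean⟩ := exists_sub_eq_deriv_mul hσ.contDiff a v
  have hξ_abs : |ξ| ≤ C + |v| := by
    have hdist := abs_sub_left_of_mem_uIcc hξ
    rw [add_sub_cancel_left] at hdist
    linarith [abs_sub_abs_le_abs_sub ξ a]
  have hξ_sq : 1 + ξ ^ 2 ≤ 2 * (1 + C ^ 2) * (1 + v ^ 2) := by
    have hsq := pow_le_pow_left₀ (abs_nonneg ξ) hξ_abs 2
    rw [sq_abs] at hsq
    nlinarith [sq_nonneg (C - |v|), sq_abs v, mul_nonneg (sq_nonneg C) (sq_nonneg v)]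
  have hweight : (2 * (1 + C ^ 2)) ^ ((p - 1) / 2) * (1 + v ^ 2) ^ ((p - 1) / 2)
      ≤ (1 + ξ ^ 2) ^ ((p - 1) / 2) := by
    rw [← Real.mul_rpow (by positivity) (by positivity)]
    exact Real.rpow_le_rpow_of_nonpos (by positivity) hξ_sq (by linarith)
  calc c₁ * (2 * (1 + C ^ 2)) ^ ((p - 1) / 2) * dissipation p v
      = c₁ * ((2 * (1 + C ^ 2)) ^ ((p - 1) / 2) * (1 + v ^ 2) ^ ((p - 1) / 2)) * v ^ 2 := by
        rw [dissipation]
        ring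
    _ ≤ c₁ * (1 + ξ ^ 2) ^ ((p - 1) / 2) * v ^ 2 := by gcongr
    _ ≤ deriv σ ξ * v ^ 2 := mul_le_mul_of_nonneg_right (hσ.lower_bound ξ) (sq_nonneg v)
    _ = v * (σ (a + v) - σ a) := by
        rw [hmean]
        ring

end IsPseudoplastic

end PointwiseEstimates

section SpatialEnergy

lemma L2norm_eq_sqrt (g : ℝ → ℝ) : L2norm g = √(∫ x, g x ^ 2) :=
  (Real.sqrt_eq_rpow _).symm

lemma L2norm_nonneg (g : ℝ → ℝ) : 0 ≤ L2norm g :=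
  (Real.sqrt_nonneg _).trans_eq (L2norm_eq_sqrt g).symm

lemma L2norm_sq (g : ℝ → ℝ) : L2norm g ^ 2 = ∫ x, g x ^ 2 := by
  rw [L2norm_eq_sqrt, Real.sq_sqrt (integral_nonneg fun x => sq_nonneg (g x))]

lemma integral_abs_mul_abs_le_L2norm_mul_L2norm {g h : ℝ → ℝ} (hg : MemLp g 2) (hh : MemLp h 2) :
    ∫ x, |g x| * |h x| ≤ L2norm g * L2norm h := by
  have hholder := integral_mul_le_Lp_mul_Lq_of_nonneg (μ := volume) Real.HolderConjugate.two_two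
    (Eventually.of_forall fun x => abs_nonneg (g x))
    (Eventually.of_forall fun x => abs_nonneg (h x))
    (ENNReal.ofReal_ofNat 2 ▸ hg.abs) (ENNReal.ofReal_ofNat 2 ▸ hh.abs)
  simpa only [L2norm, Real.rpow_two, sq_abs] using hholder

/-- A flux with first and second derivatives bounded by `L` and `f'' ≥ m` on the range `[A, B]`. -/
structure IsConvexFluxOn (A B m L : ℝ) (f : ℝ → ℝ) : Prop where
  contDiff : ContDiff ℝ 2 f
  abs_deriv_le : ∀ u ∈ Icc A B, |deriv f u| ≤ L
  le_deriv_deriv : ∀ u ∈ Icc A B, m ≤ deriv (deriv f) u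
  abs_deriv_deriv_le : ∀ u ∈ Icc A B, |deriv (deriv f) u| ≤ L

/-- A majorant, up to constants, of all the integrands in the energy estimate for the perturbation
`φ` of the background `V`. -/
noncomputable def regularityDensity (V φ : ℝ → ℝ) (x : ℝ) : ℝ :=
  φ x ^ 2 + deriv φ x ^ 2 + deriv (deriv φ) x ^ 2 + deriv (deriv V) x ^ 2

/-- One time slice of the problem: a nondecreasing background `V` with slope at most `C` and a
perturbation `φ`, both `V` and `V + φ` taking values in `[A, B]`. -/
structure IsPerturbedProfile (A B C : ℝ) (V φ : ℝ → ℝ) : Prop where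
  contDiff_background : ContDiff ℝ 2 V
  contDiff_perturbation : ContDiff ℝ 2 φ
  background_mem : ∀ x, V x ∈ Icc A B
  sum_mem : ∀ x, V x + φ x ∈ Icc A B
  deriv_mem : ∀ x, deriv V x ∈ Icc 0 C
  integrable_density : Integrable (regularityDensity V φ)

/-- The value of `∂ₜφ` that the perturbation equation prescribes for the slice `(V, φ)`. -/
noncomputable def evolution (f σ V φ : ℝ → ℝ) (x : ℝ) : ℝ :=
  -(deriv f (V x + φ x) * (deriv V x + deriv φ x) - deriv f (V x) * deriv V x)
    + deriv σ (deriv V x + deriv φ x) * (deriv (deriv V) x + deriv (deriv φ) x)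

/-- The primitive of the flux that vanishes at `0`. -/
noncomputable def fluxPrimitive (f : ℝ → ℝ) (u : ℝ) : ℝ := ∫ s in (0 : ℝ)..u, f s

/-- The flux whose divergence links `φ ∂ₜφ` to the coercive terms of the energy balance. -/
noncomputable def energyFlux (f σ V φ : ℝ → ℝ) (x : ℝ) : ℝ :=
  φ x * (σ (deriv V x + deriv φ x) - σ (deriv V x))
    - relativeFlux (fluxPrimitive f) (V x + φ x) (-φ x)

/-- The divergence of `energyFlux`, by `hasDerivAt_energyFlux`. -/
noncomputable def energyBalance (f σ V φ : ℝ → ℝ) (x : ℝ) : ℝ :=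
  φ x * evolution f σ V φ x + relativeFlux f (V x) (φ x) * deriv V x
    + deriv φ x * (σ (deriv V x + deriv φ x) - σ (deriv V x))
    - φ x * (deriv σ (deriv V x) * deriv (deriv V) x)

lemma abs_mul_abs_le_of_sq_add_sq_le {a b D : ℝ} (hD : a ^ 2 + b ^ 2 ≤ D) : |a| * |b| ≤ D := by
  nlinarith [sq_nonneg (|a| - |b|), sq_abs a, sq_abs b, sq_nonneg a, sq_nonneg b]

lemma sq_perturbation_le_regularityDensity (V φ : ℝ → ℝ) (x : ℝ) :
    φ x ^ 2 ≤ regularityDensity V φ x := by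
  unfold regularityDensity
  linarith [sq_nonneg (deriv φ x), sq_nonneg (deriv (deriv φ) x), sq_nonneg (deriv (deriv V) x)]

lemma sq_deriv_perturbation_le_regularityDensity (V φ : ℝ → ℝ) (x : ℝ) :
    deriv φ x ^ 2 ≤ regularityDensity V φ x := by
  unfold regularityDensity
  linarith [sq_nonneg (φ x), sq_nonneg (deriv (deriv φ) x), sq_nonneg (deriv (deriv V) x)]

lemma sq_second_deriv_background_le_regularityDensity (V φ : ℝ → ℝ) (x : ℝ) :
    deriv (deriv V) x ^ 2 ≤ regularityDensity V φ x := by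
  unfold regularityDensity
  linarith [sq_nonneg (φ x), sq_nonneg (deriv φ x), sq_nonneg (deriv (deriv φ) x)]

lemma regularityDensity_nonneg (V φ : ℝ → ℝ) (x : ℝ) : 0 ≤ regularityDensity V φ x :=
  (sq_nonneg _).trans (sq_perturbation_le_regularityDensity V φ x)

lemma abs_perturbation_mul_abs_deriv_le (V φ : ℝ → ℝ) (x : ℝ) :
    |φ x| * |deriv φ x| ≤ regularityDensity V φ x :=
  abs_mul_abs_le_of_sq_add_sq_le (by
    unfold regularityDensity
    linarith [sq_nonneg (deriv (deriv φ) x), sq_nonneg (deriv (deriv V) x)])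

lemma abs_perturbation_mul_abs_second_deriv_le (V φ : ℝ → ℝ) (x : ℝ) :
    |φ x| * |deriv (deriv φ) x| ≤ regularityDensity V φ x :=
  abs_mul_abs_le_of_sq_add_sq_le (by
    unfold regularityDensity
    linarith [sq_nonneg (deriv φ x), sq_nonneg (deriv (deriv V) x)])

lemma abs_perturbation_mul_abs_second_deriv_background_le (V φ : ℝ → ℝ) (x : ℝ) :
    |φ x| * |deriv (deriv V) x| ≤ regularityDensity V φ x :=
  abs_mul_abs_le_of_sq_add_sq_le (by
    unfold regularityDensity
    linarith [sq_nonneg (deriv φ x), sq_nonneg (deriv (deriv φ) x)])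

lemma abs_dissipation_deriv_le_regularityDensity {p : ℝ} (hp : p ≤ 1) (V φ : ℝ → ℝ) (x : ℝ) :
    |dissipation p (deriv φ x)| ≤ regularityDensity V φ x := by
  rw [abs_of_nonneg (dissipation_nonneg p _)]
  exact (dissipation_le_sq hp _).trans (sq_deriv_perturbation_le_regularityDensity V φ x)

lemma deriv_fluxPrimitive {f : ℝ → ℝ} (hf : Continuous f) : deriv (fluxPrimitive f) = f :=
  funext fun u => hf.deriv_integral f 0 u

lemma contDiff_fluxPrimitive {f : ℝ → ℝ} (hf : ContDiff ℝ 1 f) :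
    ContDiff ℝ 2 (fluxPrimitive f) := by
  rw [show (2 : WithTop ℕ∞) = 1 + 1 from one_add_one_eq_two.symm, contDiff_succ_iff_deriv]
  refine ⟨fun u => ?_, by simp, by rwa [deriv_fluxPrimitive hf.continuous]⟩
  exact (hf.continuous.integral_hasStrictDerivAt 0 u).hasDerivAt.differentiableAt

lemma IsPseudoplastic.abs_mul_source_le {σ : ℝ → ℝ} {p c₁ c₂ : ℝ} (hσ : IsPseudoplastic p c₁ c₂ σ)
    (hp : p ≤ 1) (hc₁ : 0 < c₁) (V φ : ℝ → ℝ) (x : ℝ) :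
    |φ x * (deriv σ (deriv V x) * deriv (deriv V) x)| ≤ c₂ * (|φ x| * |deriv (deriv V) x|) := by
  obtain ⟨hnonneg, hle⟩ := hσ.deriv_mem_Icc hp hc₁ (deriv V x)
  rw [abs_mul, abs_mul, abs_of_nonneg hnonneg, mul_left_comm]
  exact mul_le_mul_of_nonneg_right hle (by positivity)

namespace IsPerturbedProfile

variable {f σ V φ : ℝ → ℝ} {A B C m L p c₁ c₂ : ℝ}

lemma integrable_of_abs_le (hV : IsPerturbedProfile A B C V φ) {g : ℝ → ℝ} {K : ℝ}
    (hg : Continuous g) (hle : ∀ x, |g x| ≤ K * regularityDensity V φ x) : Integrable g :=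
  (hV.integrable_density.const_mul K).mono' hg.aestronglyMeasurable (Eventually.of_forall hle)

lemma continuous_deriv_background (hV : IsPerturbedProfile A B C V φ) : Continuous (deriv V) :=
  hV.contDiff_background.continuous_deriv one_le_two

lemma continuous_deriv_deriv_background (hV : IsPerturbedProfile A B C V φ) :
    Continuous (deriv (deriv V)) :=
  (hV.contDiff_background.deriv' : ContDiff ℝ 1 _).continuous_deriv le_rfl

lemma continuous_deriv_perturbation (hV : IsPerturbedProfile A B C V φ) : Continuous (deriv φ) :=
  hV.contDiff_perturbation.continuous_deriv one_le_two

lemma continuous_evolution (hV : IsPerturbedProfile A B C V φ) (hf : ContDiff ℝ 1 f)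
    (hσ : ContDiff ℝ 1 σ) : Continuous (evolution f σ V φ) := by
  have hφ₁ : ContDiff ℝ 1 (deriv φ) := hV.contDiff_perturbation.deriv'
  have := hf.continuous_deriv le_rfl
  have := hσ.continuous_deriv le_rfl
  have := hV.contDiff_background.continuous
  have := hV.contDiff_perturbation.continuous
  have := hV.continuous_deriv_background
  have := hV.continuous_deriv_deriv_background
  have := hV.continuous_deriv_perturbation
  have := hφ₁.continuous_deriv le_rfl
  unfold evolution
  fun_prop

lemma abs_evolution_le (hV : IsPerturbedProfile A B C V φ) (hf : IsConvexFluxOn A B m L f)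
    (hσ : IsPseudoplastic p c₁ c₂ σ) (hp : p ≤ 1) (hc₁ : 0 < c₁) (x : ℝ) :
    |evolution f σ V φ x| ≤ L * C * |φ x| + L * |deriv φ x|
      + c₂ * (|deriv (deriv V) x| + |deriv (deriv φ) x|) := by
  obtain ⟨ξ, hξ, hmean⟩ := exists_sub_eq_deriv_mul (hf.contDiff.deriv' : ContDiff ℝ 1 _) (V x) (φ x)
  have hsplit : evolution f σ V φ x = -(deriv (deriv f) ξ * φ x * deriv V x)
      + -(deriv f (V x + φ x) * deriv φ x)
      + deriv σ (deriv V x + deriv φ x) * (deriv (deriv V) x + deriv (deriv φ) x) := by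
    rw [← hmean, evolution]
    ring
  have hconvection : |deriv (deriv f) ξ * φ x * deriv V x| ≤ L * C * |φ x| := by
    have hξL := hf.abs_deriv_deriv_le ξ (uIcc_subset_Icc (hV.background_mem x) (hV.sum_mem x) hξ)
    rw [abs_mul, abs_mul, abs_of_nonneg (hV.deriv_mem x).1]
    calc |deriv (deriv f) ξ| * |φ x| * deriv V x ≤ L * |φ x| * C :=
          mul_le_mul (mul_le_mul_of_nonneg_right hξL (abs_nonneg _)) (hV.deriv_mem x).2
            (hV.deriv_mem x).1 (mul_nonneg ((abs_nonneg _).trans hξL) (abs_nonneg _))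
      _ = L * C * |φ x| := by ring
  have htransport : |deriv f (V x + φ x) * deriv φ x| ≤ L * |deriv φ x| := by
    rw [abs_mul]
    exact mul_le_mul_of_nonneg_right (hf.abs_deriv_le _ (hV.sum_mem x)) (abs_nonneg _)
  have hviscosity : |deriv σ (deriv V x + deriv φ x) * (deriv (deriv V) x + deriv (deriv φ) x)|
      ≤ c₂ * (|deriv (deriv V) x| + |deriv (deriv φ) x|) := by
    obtain ⟨hnonneg, hle⟩ := hσ.deriv_mem_Icc hp hc₁ (deriv V x + deriv φ x)
    rw [abs_mul, abs_of_nonneg hnonneg]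
    exact mul_le_mul hle (abs_add_le _ _) (abs_nonneg _) (hnonneg.trans hle)
  rw [hsplit]
  refine (abs_add_three _ _ _).trans ?_
  rw [abs_neg, abs_neg]
  exact add_le_add_three hconvection htransport hviscosity

lemma abs_mul_evolution_le (hV : IsPerturbedProfile A B C V φ) (hf : IsConvexFluxOn A B m L f)
    (hσ : IsPseudoplastic p c₁ c₂ σ) (hp : p ≤ 1) (hc₁ : 0 < c₁) (x : ℝ) :
    |φ x * evolution f σ V φ x| ≤ (L * C + L + 2 * c₂) * regularityDensity V φ x := by
  have hL : 0 ≤ L := (abs_nonneg _).trans (hf.abs_deriv_le _ (hV.background_mem x))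
  have hC : 0 ≤ C := (hV.deriv_mem x).1.trans (hV.deriv_mem x).2
  have hc₂ : 0 ≤ c₂ := (hσ.upper_constant_pos hc₁).le
  have hconvection := mul_le_mul_of_nonneg_left (sq_perturbation_le_regularityDensity V φ x)
    (mul_nonneg hL hC)
  have htransport := mul_le_mul_of_nonneg_left (abs_perturbation_mul_abs_deriv_le V φ x) hL
  have hviscosity := mul_le_mul_of_nonneg_left (abs_perturbation_mul_abs_second_deriv_le V φ x) hc₂
  have hsource :=
    mul_le_mul_of_nonneg_left (abs_perturbation_mul_abs_second_deriv_background_le V φ x) hc₂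
  rw [← sq_abs] at hconvection
  rw [abs_mul]
  linarith [mul_le_mul_of_nonneg_left (hV.abs_evolution_le hf hσ hp hc₁ x) (abs_nonneg (φ x))]

lemma integrable_mul_evolution (hV : IsPerturbedProfile A B C V φ) (hf : IsConvexFluxOn A B m L f)
    (hσ : IsPseudoplastic p c₁ c₂ σ) (hp : p ≤ 1) (hc₁ : 0 < c₁) :
    Integrable fun x => φ x * evolution f σ V φ x :=
  hV.integrable_of_abs_le (hV.contDiff_perturbation.continuous.mul
      (hV.continuous_evolution (hf.contDiff.of_le one_le_two) hσ.contDiff))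
    (hV.abs_mul_evolution_le hf hσ hp hc₁)

lemma integrable_abs_mul_abs_second_deriv_background (hV : IsPerturbedProfile A B C V φ) :
    Integrable fun x => |φ x| * |deriv (deriv V) x| :=
  hV.integrable_of_abs_le (K := 1)
    (hV.contDiff_perturbation.continuous.abs.mul hV.continuous_deriv_deriv_background.abs)
    fun x => by
      rw [abs_mul, abs_abs, abs_abs, one_mul]
      exact abs_perturbation_mul_abs_second_deriv_background_le V φ x

lemma memLp_perturbation (hV : IsPerturbedProfile A B C V φ) : MemLp φ 2 := by
  have hcont := hV.contDiff_perturbation.continuous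
  refine (memLp_two_iff_integrable_sq hcont.aestronglyMeasurable).2
    (hV.integrable_of_abs_le (K := 1) (hcont.pow 2) fun x => ?_)
  rw [abs_sq, one_mul]
  exact sq_perturbation_le_regularityDensity V φ x

lemma memLp_second_deriv_background (hV : IsPerturbedProfile A B C V φ) :
    MemLp (deriv (deriv V)) 2 := by
  have hcont := hV.continuous_deriv_deriv_background
  refine (memLp_two_iff_integrable_sq hcont.aestronglyMeasurable).2
    (hV.integrable_of_abs_le (K := 1) (hcont.pow 2) fun x => ?_)
  rw [abs_sq, one_mul]
  exact sq_second_deriv_background_le_regularityDensity V φ x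

lemma abs_sq_mul_deriv_le (hV : IsPerturbedProfile A B C V φ) (x : ℝ) :
    |φ x ^ 2 * deriv V x| ≤ C * regularityDensity V φ x := by
  obtain ⟨hnonneg, hle⟩ := hV.deriv_mem x
  rw [abs_mul, abs_sq, abs_of_nonneg hnonneg, mul_comm C]
  exact mul_le_mul (sq_perturbation_le_regularityDensity V φ x) hle hnonneg
    (regularityDensity_nonneg V φ x)

lemma integrable_sq_mul_deriv (hV : IsPerturbedProfile A B C V φ) :
    Integrable fun x => φ x ^ 2 * deriv V x :=
  hV.integrable_of_abs_le
    ((hV.contDiff_perturbation.continuous.pow 2).mul hV.continuous_deriv_background)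
    hV.abs_sq_mul_deriv_le

lemma integrable_dissipation (hV : IsPerturbedProfile A B C V φ) (hp : p ≤ 1) :
    Integrable fun x => dissipation p (deriv φ x) :=
  hV.integrable_of_abs_le (K := 1)
    ((continuous_dissipation p).comp hV.continuous_deriv_perturbation)
    (by simpa only [one_mul] using abs_dissipation_deriv_le_regularityDensity hp V φ)

lemma hasDerivAt_energyFlux (hV : IsPerturbedProfile A B C V φ) (hf : ContDiff ℝ 1 f)
    (hσ : ContDiff ℝ 1 σ) (x : ℝ) :
    HasDerivAt (energyFlux f σ V φ) (energyBalance f σ V φ x) x := by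
  have hV₁ := (hV.contDiff_background.differentiable (by simp) x).hasDerivAt
  have hφ₁ := (hV.contDiff_perturbation.differentiable (by simp) x).hasDerivAt
  have hV₂ := (hV.contDiff_background.differentiable_deriv_two x).hasDerivAt
  have hφ₂ := (hV.contDiff_perturbation.differentiable_deriv_two x).hasDerivAt
  have hσ' := fun v => (hσ.differentiable (by simp) v).hasDerivAt
  have hf' := fun u => (hf.differentiable (by simp) u).hasDerivAt
  have hF : ∀ u, HasDerivAt (fluxPrimitive f) (f u) u := fun u =>
    (hf.continuous.integral_hasStrictDerivAt 0 u).hasDerivAt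
  have hviscous := hφ₁.mul (((hσ' _).comp x (hV₂.add hφ₂)).sub ((hσ' _).comp x hV₂))
  have hconvective := (((hF _).comp x hV₁).sub ((hF _).comp x (hV₁.add hφ₁))).add
    (((hf' _).comp x (hV₁.add hφ₁)).mul hφ₁)
  refine ((hviscous.sub hconvective).congr_deriv ?_).congr_of_eventuallyEq
    (Eventually.of_forall fun y => ?_)
  · simp only [energyBalance, evolution, relativeFlux, Function.comp_apply, Pi.add_apply,
      Pi.sub_apply]
    ring
  · simp only [energyFlux, relativeFlux, deriv_fluxPrimitive hf.continuous, Function.comp_apply,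
      Pi.add_apply, Pi.sub_apply, Pi.mul_apply, add_neg_cancel_right]
    ring

lemma integrable_energyFlux (hV : IsPerturbedProfile A B C V φ) (hf : IsConvexFluxOn A B m L f)
    (hσ : IsPseudoplastic p c₁ c₂ σ) (hp : p ≤ 1) (hc₁ : 0 < c₁) :
    Integrable (energyFlux f σ V φ) := by
  have hf1 : ContDiff ℝ 1 f := hf.contDiff.of_le one_le_two
  have hcont : Continuous (energyFlux f σ V φ) := continuous_iff_continuousAt.2 fun x =>
    (hV.hasDerivAt_energyFlux hf1 hσ.contDiff x).continuousAt
  refine hV.integrable_of_abs_le (K := c₂ + L) hcont fun x => ?_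
  have hL : 0 ≤ L := (abs_nonneg _).trans (hf.abs_deriv_le _ (hV.background_mem x))
  have hviscous : |φ x * (σ (deriv V x + deriv φ x) - σ (deriv V x))|
      ≤ c₂ * regularityDensity V φ x := by
    rw [abs_mul]
    calc |φ x| * |σ (deriv V x + deriv φ x) - σ (deriv V x)|
        ≤ |φ x| * (c₂ * |deriv φ x|) :=
          mul_le_mul_of_nonneg_left (hσ.abs_sub_le hp hc₁ _ _) (abs_nonneg _)
      _ = c₂ * (|φ x| * |deriv φ x|) := by ring
      _ ≤ c₂ * regularityDensity V φ x := mul_le_mul_of_nonneg_left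
          (abs_perturbation_mul_abs_deriv_le V φ x) (hσ.upper_constant_pos hc₁).le
  have hconvective : |relativeFlux (fluxPrimitive f) (V x + φ x) (-φ x)|
      ≤ L * regularityDensity V φ x := by
    refine (abs_relativeFlux_le (contDiff_fluxPrimitive hf1) ?_ (hV.sum_mem x) ?_).trans
      (mul_le_mul_of_nonneg_left ?_ hL)
    · rw [deriv_fluxPrimitive hf1.continuous]
      exact hf.abs_deriv_le
    · simpa using hV.background_mem x
    · rw [neg_sq]
      exact sq_perturbation_le_regularityDensity V φ x
  rw [energyFlux, add_mul]
  exact (abs_sub _ _).trans (add_le_add hviscous hconvective)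

lemma abs_relativeFlux_mul_deriv_le (hV : IsPerturbedProfile A B C V φ)
    (hf : IsConvexFluxOn A B m L f) (x : ℝ) :
    |relativeFlux f (V x) (φ x) * deriv V x| ≤ L * C * regularityDensity V φ x := by
  have hflux := abs_relativeFlux_le hf.contDiff hf.abs_deriv_deriv_le (hV.background_mem x)
    (hV.sum_mem x)
  obtain ⟨hnonneg, hle⟩ := hV.deriv_mem x
  have hL : 0 ≤ L := (abs_nonneg _).trans (hf.abs_deriv_le _ (hV.background_mem x))
  rw [abs_mul, abs_of_nonneg hnonneg]
  calc |relativeFlux f (V x) (φ x)| * deriv V x ≤ L * φ x ^ 2 * C :=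
        mul_le_mul hflux hle hnonneg (mul_nonneg hL (sq_nonneg _))
    _ = L * C * φ x ^ 2 := by ring
    _ ≤ L * C * regularityDensity V φ x := mul_le_mul_of_nonneg_left
        (sq_perturbation_le_regularityDensity V φ x) (mul_nonneg hL (hnonneg.trans hle))

lemma continuous_energyBalance (hV : IsPerturbedProfile A B C V φ) (hf : ContDiff ℝ 1 f)
    (hσ : ContDiff ℝ 1 σ) : Continuous (energyBalance f σ V φ) := by
  have := hf.continuous
  have := hf.continuous_deriv le_rfl
  have := hσ.continuous
  have := hσ.continuous_deriv le_rfl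
  have := hV.contDiff_background.continuous
  have := hV.contDiff_perturbation.continuous
  have := hV.continuous_deriv_background
  have := hV.continuous_deriv_deriv_background
  have := hV.continuous_deriv_perturbation
  have := hV.continuous_evolution hf hσ
  unfold energyBalance relativeFlux
  fun_prop

lemma integrable_energyBalance (hV : IsPerturbedProfile A B C V φ) (hf : IsConvexFluxOn A B m L f)
    (hσ : IsPseudoplastic p c₁ c₂ σ) (hp : p ≤ 1) (hc₁ : 0 < c₁) :
    Integrable (energyBalance f σ V φ) := by
  refine hV.integrable_of_abs_le (K := (L * C + L + 2 * c₂) + L * C + c₂ + c₂)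
    (hV.continuous_energyBalance (hf.contDiff.of_le one_le_two) hσ.contDiff) fun x => ?_
  have hc₂ : 0 ≤ c₂ := (hσ.upper_constant_pos hc₁).le
  have hviscous : |deriv φ x * (σ (deriv V x + deriv φ x) - σ (deriv V x))|
      ≤ c₂ * regularityDensity V φ x := by
    rw [abs_mul]
    calc |deriv φ x| * |σ (deriv V x + deriv φ x) - σ (deriv V x)|
        ≤ |deriv φ x| * (c₂ * |deriv φ x|) :=
          mul_le_mul_of_nonneg_left (hσ.abs_sub_le hp hc₁ _ _) (abs_nonneg _)
      _ = c₂ * deriv φ x ^ 2 := by rw [← sq_abs (deriv φ x)]; ring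
      _ ≤ c₂ * regularityDensity V φ x :=
          mul_le_mul_of_nonneg_left (sq_deriv_perturbation_le_regularityDensity V φ x) hc₂
  have hsource := (hσ.abs_mul_source_le hp hc₁ V φ x).trans (mul_le_mul_of_nonneg_left
    (abs_perturbation_mul_abs_second_deriv_background_le V φ x) hc₂)
  rw [energyBalance, add_mul, add_mul, add_mul _ (L * C)]
  exact (abs_sub _ _).trans (add_le_add ((abs_add_three _ _ _).trans (add_le_add_three
    (hV.abs_mul_evolution_le hf hσ hp hc₁ x) (hV.abs_relativeFlux_mul_deriv_le hf x) hviscous))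
    hsource)

lemma coercive_le_energyBalance (hV : IsPerturbedProfile A B C V φ)
    (hf : IsConvexFluxOn A B m L f) (hσ : IsPseudoplastic p c₁ c₂ σ) (hp : p ≤ 1) (hc₁ : 0 < c₁)
    (x : ℝ) :
    φ x * evolution f σ V φ x + m / 2 * (φ x ^ 2 * deriv V x)
        + c₁ * (2 * (1 + C ^ 2)) ^ ((p - 1) / 2) * dissipation p (deriv φ x)
        - c₂ * (|φ x| * |deriv (deriv V) x|)
      ≤ energyBalance f σ V φ x := by
  obtain ⟨hnonneg, hle⟩ := hV.deriv_mem x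
  have hconvex : m / 2 * (φ x ^ 2 * deriv V x) ≤ relativeFlux f (V x) (φ x) * deriv V x := by
    rw [← mul_assoc]
    exact mul_le_mul_of_nonneg_right (le_relativeFlux hf.contDiff hf.le_deriv_deriv
      (hV.background_mem x) (hV.sum_mem x)) hnonneg
  have hdissipative := hσ.mul_dissipation_le hp hc₁ (abs_le.2 ⟨by linarith, hle⟩) (deriv φ x)
  have hsource := (le_abs_self _).trans (hσ.abs_mul_source_le hp hc₁ V φ x)
  rw [energyBalance]
  linarith

/-- The nonlinear convection and the viscosity enter only through the divergence `energyBalance`,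
which integrates to `0`; what remains is the source `σ(∂ₓV)`, estimated by Cauchy–Schwarz. -/
lemma integral_mul_evolution_le (hV : IsPerturbedProfile A B C V φ)
    (hf : IsConvexFluxOn A B m L f) (hσ : IsPseudoplastic p c₁ c₂ σ) (hp : p ≤ 1) (hc₁ : 0 < c₁) :
    (∫ x, φ x * evolution f σ V φ x) + m / 2 * (∫ x, φ x ^ 2 * deriv V x)
        + c₁ * (2 * (1 + C ^ 2)) ^ ((p - 1) / 2) * ∫ x, dissipation p (deriv φ x)
      ≤ c₂ * (L2norm φ * L2norm (deriv (deriv V))) := by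
  have hf1 : ContDiff ℝ 1 f := hf.contDiff.of_le one_le_two
  have hzero : ∫ x, energyBalance f σ V φ x = 0 :=
    integral_eq_zero_of_hasDerivAt_of_integrable (hV.hasDerivAt_energyFlux hf1 hσ.contDiff)
      (hV.integrable_energyBalance hf hσ hp hc₁) (hV.integrable_energyFlux hf hσ hp hc₁)
  have hevolution := hV.integrable_mul_evolution hf hσ hp hc₁
  have hsq := hV.integrable_sq_mul_deriv.const_mul (m / 2)
  have hdiss := (hV.integrable_dissipation hp).const_mul
    (c₁ * (2 * (1 + C ^ 2)) ^ ((p - 1) / 2))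
  have hsource := hV.integrable_abs_mul_abs_second_deriv_background.const_mul c₂
  have hmono := integral_mono (((hevolution.add hsq).add hdiss).sub hsource)
    (hV.integrable_energyBalance hf hσ hp hc₁)
    (hV.coercive_le_energyBalance hf hσ hp hc₁)
  rw [hzero, integral_sub' ((hevolution.add hsq).add hdiss) hsource,
    integral_add' (hevolution.add hsq) hdiss, integral_add' hevolution hsq,
    MeasureTheory.integral_const_mul, MeasureTheory.integral_const_mul,
    MeasureTheory.integral_const_mul] at hmono
  have hcauchy := mul_le_mul_of_nonneg_left
    (integral_abs_mul_abs_le_L2norm_mul_L2norm hV.memLp_perturbation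
      hV.memLp_second_deriv_background) (hσ.upper_constant_pos hc₁).le
  linarith

end IsPerturbedProfile

end SpatialEnergy

section TimeIntegration

lemma intervalIntegrable_one_add_rpow (s : ℝ) {t : ℝ} (ht : 0 ≤ t) :
    IntervalIntegrable (fun τ : ℝ => (1 + τ) ^ s) volume 0 t := by
  refine ContinuousOn.intervalIntegrable fun τ hτ => ?_
  rw [uIcc_of_le ht] at hτ
  exact (ContinuousAt.rpow_const (by fun_prop)
    (Or.inl (by linarith [hτ.1] : 0 < 1 + τ).ne')).continuousWithinAt

lemma integral_one_add_rpow_neg_le {r t : ℝ} (hr : 1 < r) (ht : 0 ≤ t) :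
    ∫ τ in (0 : ℝ)..t, (1 + τ) ^ (-r) ≤ (r - 1)⁻¹ := by
  have hshift : ∫ τ in (0 : ℝ)..t, (1 + τ) ^ (-r) = ∫ s in (1 : ℝ)..1 + t, s ^ (-r) := by
    simpa using intervalIntegral.integral_comp_add_left (a := 0) (b := t) (fun s : ℝ => s ^ (-r)) 1
  have hpow : 0 ≤ (1 + t) ^ (-r + 1) := by positivity
  rw [hshift, integral_rpow (Or.inr ⟨by linarith, fun h => ?_⟩), Real.one_rpow,
    ← neg_div_neg_eq, neg_sub, show -(-r + 1) = r - 1 by ring, inv_eq_one_div]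
  · exact div_le_div_of_nonneg_right (by linarith) (by linarith)
  · rw [uIcc_of_le (by linarith)] at h
    linarith [h.1]

lemma integrable_uncurry_of_norm_integral_le {g : ℝ → ℝ → ℝ} {t K : ℝ}
    (hg : Continuous (uncurry g)) (hintegrable : ∀ τ ∈ Icc 0 t, Integrable (g τ))
    (hle : ∀ τ ∈ Icc 0 t, ∫ x, ‖g τ x‖ ≤ K) :
    Integrable (uncurry g) ((volume.restrict (Ioc 0 t)).prod volume) := by
  have hmeas : AEStronglyMeasurable (uncurry g) ((volume.restrict (Ioc 0 t)).prod volume) :=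
    hg.aestronglyMeasurable
  refine (integrable_prod_iff hmeas).2 ⟨?_, ?_⟩
  · exact (ae_restrict_iff' measurableSet_Ioc).2
      (Eventually.of_forall fun τ hτ => hintegrable τ (Ioc_subset_Icc_self hτ))
  · refine Integrable.mono' (integrable_const K) hmeas.norm.integral_prod_right'
      ((ae_restrict_iff' measurableSet_Ioc).2 (Eventually.of_forall fun τ hτ => ?_))
    rw [Real.norm_of_nonneg (integral_nonneg fun x => norm_nonneg _)]
    exact hle τ (Ioc_subset_Icc_self hτ)

lemma integral_sq_sub_integral_sq_eq {φ : ℝ → ℝ → ℝ} {t : ℝ} (hφ : ContDiff ℝ 2 (uncurry φ))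
    (ht : 0 ≤ t) (hsq : ∀ τ ∈ Icc 0 t, Integrable fun x => φ τ x ^ 2)
    (hprod : Integrable (uncurry fun τ x => φ τ x * deriv (fun s => φ s x) τ)
      ((volume.restrict (Ioc 0 t)).prod volume)) :
    (∫ x, φ t x ^ 2) - ∫ x, φ 0 x ^ 2
      = ∫ τ in (0 : ℝ)..t, 2 * ∫ x, φ τ x * deriv (fun s => φ s x) τ := by
  have hpointwise : ∀ x, φ t x ^ 2 - φ 0 x ^ 2
      = 2 * ∫ τ in Ioc 0 t, φ τ x * deriv (fun s => φ s x) τ := fun x => by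
    have hslice : ContDiff ℝ 2 fun s => φ s x := contDiff_slice_time hφ x
    have hderiv : ∀ τ, HasDerivAt (fun s => φ s x ^ 2) (2 * (φ τ x * deriv (fun s => φ s x) τ)) τ :=
      fun τ => ((hslice.differentiable (by simp) τ).hasDerivAt.pow 2).congr_deriv (by
        norm_num
        ring)
    have hcont : Continuous fun τ => 2 * (φ τ x * deriv (fun s => φ s x) τ) :=
      continuous_const.mul (hslice.continuous.mul (hslice.continuous_deriv one_le_two))
    rw [← intervalIntegral.integral_of_le ht, ← intervalIntegral.integral_const_mul,
      integral_eq_sub_of_hasDerivAt (fun τ _ => hderiv τ) (hcont.intervalIntegrable _ _)]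
  rw [← integral_sub (hsq t ⟨ht, le_rfl⟩) (hsq 0 ⟨le_rfl, ht⟩),
    intervalIntegral.integral_const_mul, intervalIntegral.integral_of_le ht,
    integral_integral_swap hprod, ← MeasureTheory.integral_const_mul]
  exact integral_congr_ae (Eventually.of_forall hpointwise)

lemma le_sq_add_of_le_sq_add_mul {ι : Type*} {s : Set ι} {N F : ι → ℝ} {M K : ℝ} (hM : 0 ≤ M)
    (hK : 0 ≤ K) (hN : ∀ t ∈ s, 0 ≤ N t) (hbdd : BddAbove (N '' s))
    (hNF : ∀ t ∈ s, N t ^ 2 ≤ F t)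
    (hF : ∀ R, (∀ t ∈ s, N t ≤ R) → ∀ t ∈ s, F t ≤ M ^ 2 + K * R) {t : ι} (ht : t ∈ s) :
    F t ≤ (M + K) ^ 2 := by
  set R := sSup (N '' s)
  have hNR : ∀ t ∈ s, N t ≤ R := fun t ht => le_csSup hbdd (mem_image_of_mem N ht)
  have hR : 0 ≤ R := (hN t ht).trans (hNR t ht)
  have hRsq : R ≤ √(M ^ 2 + K * R) := csSup_le ⟨N t, mem_image_of_mem N ht⟩ (by
    rintro _ ⟨τ, hτ, rfl⟩
    exact Real.le_sqrt_of_sq_le ((hNF τ hτ).trans (hF R hNR τ hτ)))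
  have hRsq : R ^ 2 ≤ M ^ 2 + K * R := (Real.le_sqrt hR (by positivity)).1 hRsq
  have hRle : R ≤ M + K := by
    by_contra! hlt
    nlinarith
  nlinarith [hF R hNR t ht]

/-- The energy of `φ` at time `t` together with the dissipation that it has undergone, the
rarefaction term weighted by `α` and the viscous one by `β`. -/
noncomputable def weightedEnergy (p α β : ℝ) (U φ : ℝ → ℝ → ℝ) (t : ℝ) : ℝ :=
  L2norm (φ t) ^ 2 + α * (∫ τ in (0 : ℝ)..t, ∫ x, φ τ x ^ 2 * deriv (U τ) x)
    + β * ∫ τ in (0 : ℝ)..t, ∫ x, dissipation p (deriv (φ τ) x)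

lemma integral_integral_dissipation_nonneg (p : ℝ) (φ : ℝ → ℝ → ℝ) {t : ℝ} (ht : 0 ≤ t) :
    0 ≤ ∫ τ in (0 : ℝ)..t, ∫ x, dissipation p (deriv (φ τ) x) :=
  intervalIntegral.integral_nonneg ht fun _ _ => integral_nonneg fun _ => dissipation_nonneg _ _

/-- A family of perturbed profiles over `[0, T]`, regular in time and with regularity densities of
total mass at most `K`. -/
structure IsPerturbedFlow (A B C K T : ℝ) (U φ : ℝ → ℝ → ℝ) : Prop where
  contDiff_background : ContDiff ℝ 2 (uncurry U)
  contDiff_perturbation : ContDiff ℝ 2 (uncurry φ)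
  profile : ∀ t ∈ Icc 0 T, IsPerturbedProfile A B C (U t) (φ t)
  integral_density_le : ∀ t ∈ Icc 0 T, ∫ x, regularityDensity (U t) (φ t) x ≤ K

namespace IsPerturbedFlow

variable {f σ : ℝ → ℝ} {U φ : ℝ → ℝ → ℝ} {A B C K T m L p c₁ c₂ r t κ : ℝ}

lemma integrable_uncurry_of_abs_le (h : IsPerturbedFlow A B C K T U φ) (ht : t ∈ Icc 0 T)
    {g : ℝ → ℝ → ℝ} (hg : Continuous (uncurry g)) (hκ : 0 ≤ κ)
    (hle : ∀ τ ∈ Icc 0 T, ∀ x, |g τ x| ≤ κ * regularityDensity (U τ) (φ τ) x) :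
    Integrable (uncurry g) ((volume.restrict (Ioc 0 t)).prod volume) := by
  have hmem : ∀ {τ}, τ ∈ Icc 0 t → τ ∈ Icc 0 T := fun hτ => Icc_subset_Icc_right ht.2 hτ
  have hintegrable : ∀ τ ∈ Icc 0 t, Integrable (g τ) := fun τ hτ =>
    (h.profile τ (hmem hτ)).integrable_of_abs_le (hg.comp (by fun_prop : Continuous (Prod.mk τ)))
      (hle τ (hmem hτ))
  refine integrable_uncurry_of_norm_integral_le (K := κ * K) hg hintegrable fun τ hτ => ?_
  calc ∫ x, ‖g τ x‖ ≤ ∫ x, κ * regularityDensity (U τ) (φ τ) x :=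
        integral_mono (hintegrable τ hτ).norm
          ((h.profile τ (hmem hτ)).integrable_density.const_mul κ) (hle τ (hmem hτ))
    _ = κ * ∫ x, regularityDensity (U τ) (φ τ) x := MeasureTheory.integral_const_mul _ _
    _ ≤ κ * K := mul_le_mul_of_nonneg_left (h.integral_density_le τ (hmem hτ)) hκ

lemma intervalIntegrable_integral_of_abs_le (h : IsPerturbedFlow A B C K T U φ) (ht : t ∈ Icc 0 T)
    {g : ℝ → ℝ → ℝ} (hg : Continuous (uncurry g)) (hκ : 0 ≤ κ)
    (hle : ∀ τ ∈ Icc 0 T, ∀ x, |g τ x| ≤ κ * regularityDensity (U τ) (φ τ) x) :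
    IntervalIntegrable (fun τ => ∫ x, g τ x) volume 0 t := by
  rw [intervalIntegrable_iff_integrableOn_Ioc_of_le ht.1]
  exact (h.integrable_uncurry_of_abs_le ht hg hκ hle).integral_prod_left

lemma intervalIntegrable_sq_mul_deriv (h : IsPerturbedFlow A B C K T U φ) (ht : t ∈ Icc 0 T) :
    IntervalIntegrable (fun τ => ∫ x, φ τ x ^ 2 * deriv (U τ) x) volume 0 t :=
  h.intervalIntegrable_integral_of_abs_le ht
    ((h.contDiff_perturbation.continuous.pow 2).mul
      (contDiff_deriv_space (n := 1) h.contDiff_background one_add_one_eq_two.le).continuous)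
    (((h.profile t ht).deriv_mem 0).1.trans ((h.profile t ht).deriv_mem 0).2)
    fun τ hτ => (h.profile τ hτ).abs_sq_mul_deriv_le

lemma intervalIntegrable_dissipation (h : IsPerturbedFlow A B C K T U φ) (hp : p ≤ 1)
    (ht : t ∈ Icc 0 T) :
    IntervalIntegrable (fun τ => ∫ x, dissipation p (deriv (φ τ) x)) volume 0 t :=
  h.intervalIntegrable_integral_of_abs_le (κ := 1) ht
    ((continuous_dissipation p).comp
      (contDiff_deriv_space (n := 1) h.contDiff_perturbation one_add_one_eq_two.le).continuous)
    zero_le_one fun τ _ x => by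
      simpa only [one_mul] using abs_dissipation_deriv_le_regularityDensity hp (U τ) (φ τ) x

lemma integral_integral_sq_mul_deriv_nonneg (h : IsPerturbedFlow A B C K T U φ)
    (ht : t ∈ Icc 0 T) : 0 ≤ ∫ τ in (0 : ℝ)..t, ∫ x, φ τ x ^ 2 * deriv (U τ) x :=
  intervalIntegral.integral_nonneg ht.1 fun τ hτ => integral_nonneg fun x =>
    mul_nonneg (sq_nonneg _) ((h.profile τ (Icc_subset_Icc_right ht.2 hτ)).deriv_mem x).1

lemma L2norm_le_sqrt (h : IsPerturbedFlow A B C K T U φ) (ht : t ∈ Icc 0 T) :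
    L2norm (φ t) ≤ √K := by
  have hslice := h.profile t ht
  rw [L2norm_eq_sqrt]
  exact Real.sqrt_le_sqrt ((integral_mono hslice.memLp_perturbation.integrable_sq
    hslice.integrable_density (sq_perturbation_le_regularityDensity _ _)).trans
      (h.integral_density_le t ht))

lemma L2norm_sq_le_weightedEnergy (h : IsPerturbedFlow A B C K T U φ) (p : ℝ) {α β : ℝ}
    (hα : 0 ≤ α) (hβ : 0 ≤ β) (ht : t ∈ Icc 0 T) :
    L2norm (φ t) ^ 2 ≤ weightedEnergy p α β U φ t := by
  have hrarefaction := h.integral_integral_sq_mul_deriv_nonneg ht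
  have hviscous := integral_integral_dissipation_nonneg p φ ht.1
  rw [weightedEnergy, add_assoc]
  exact le_add_of_nonneg_right (by positivity)

lemma weightedEnergy_one_one_le (h : IsPerturbedFlow A B C K T U φ) (p : ℝ) {α β : ℝ}
    (hα : 0 < α) (hβ : 0 < β) (ht : t ∈ Icc 0 T) :
    weightedEnergy p 1 1 U φ t ≤ (1 + α⁻¹ + β⁻¹) * weightedEnergy p α β U φ t := by
  have hrarefaction := h.integral_integral_sq_mul_deriv_nonneg ht
  have hviscous := integral_integral_dissipation_nonneg p φ ht.1
  unfold weightedEnergy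
  set J₁ := ∫ τ in (0 : ℝ)..t, ∫ x, φ τ x ^ 2 * deriv (U τ) x
  set J₂ := ∫ τ in (0 : ℝ)..t, ∫ x, dissipation p (deriv (φ τ) x)
  have hrest : 0 ≤ α * J₁ + β * J₂ + α⁻¹ * (L2norm (φ t) ^ 2 + β * J₂)
      + β⁻¹ * (L2norm (φ t) ^ 2 + α * J₁) := by positivity
  calc L2norm (φ t) ^ 2 + 1 * J₁ + 1 * J₂
      ≤ L2norm (φ t) ^ 2 + J₁ + J₂ + (α * J₁ + β * J₂ + α⁻¹ * (L2norm (φ t) ^ 2 + β * J₂)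
        + β⁻¹ * (L2norm (φ t) ^ 2 + α * J₁)) := by linarith
    _ = (1 + α⁻¹ + β⁻¹) * (L2norm (φ t) ^ 2 + α * J₁ + β * J₂) := by
      field_simp
      ring

lemma integrable_uncurry_mul_deriv_time (h : IsPerturbedFlow A B C K T U φ)
    (hf : IsConvexFluxOn A B m L f) (hσ : IsPseudoplastic p c₁ c₂ σ) (hp : p ≤ 1) (hc₁ : 0 < c₁)
    (hevol : ∀ τ ∈ Icc 0 T, ∀ x, deriv (fun s => φ s x) τ = evolution f σ (U τ) (φ τ) x)
    (ht : t ∈ Icc 0 T) :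
    Integrable (uncurry fun τ x => φ τ x * deriv (fun s => φ s x) τ)
      ((volume.restrict (Ioc 0 t)).prod volume) := by
  have hL : 0 ≤ L := (abs_nonneg _).trans (hf.abs_deriv_le _ ((h.profile t ht).background_mem 0))
  have hC : 0 ≤ C := ((h.profile t ht).deriv_mem 0).1.trans ((h.profile t ht).deriv_mem 0).2
  have hc₂ : 0 < c₂ := hσ.upper_constant_pos hc₁
  refine h.integrable_uncurry_of_abs_le (κ := L * C + L + 2 * c₂) ht
    (h.contDiff_perturbation.continuous.mul
      (contDiff_deriv_time (n := 1) h.contDiff_perturbation one_add_one_eq_two.le).continuous)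
    (by positivity) fun τ hτ x => ?_
  rw [hevol τ hτ]
  exact (h.profile τ hτ).abs_mul_evolution_le hf hσ hp hc₁ x

lemma two_mul_integral_mul_deriv_time_le (h : IsPerturbedFlow A B C K T U φ)
    (hf : IsConvexFluxOn A B m L f) (hσ : IsPseudoplastic p c₁ c₂ σ) (hp : p ≤ 1) (hc₁ : 0 < c₁)
    (hevol : ∀ τ ∈ Icc 0 T, ∀ x, deriv (fun s => φ s x) τ = evolution f σ (U τ) (φ τ) x)
    (hsource : ∀ τ ∈ Icc 0 T, L2norm (deriv (deriv (U τ))) ≤ C * (1 + τ) ^ (-r)) {R : ℝ}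
    (hR : ∀ τ ∈ Icc 0 T, L2norm (φ τ) ≤ R) {τ : ℝ} (hτ : τ ∈ Icc 0 T) :
    2 * (∫ x, φ τ x * deriv (fun s => φ s x) τ) ≤ 2 * c₂ * C * R * (1 + τ) ^ (-r)
      - m * (∫ x, φ τ x ^ 2 * deriv (U τ) x)
      - 2 * (c₁ * (2 * (1 + C ^ 2)) ^ ((p - 1) / 2)) * ∫ x, dissipation p (deriv (φ τ) x) := by
  have hbalance := (h.profile τ hτ).integral_mul_evolution_le hf hσ hp hc₁
  have hproduct : L2norm (φ τ) * L2norm (deriv (deriv (U τ))) ≤ R * (C * (1 + τ) ^ (-r)) :=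
    mul_le_mul (hR τ hτ) (hsource τ hτ) (L2norm_nonneg _) ((L2norm_nonneg _).trans (hR τ hτ))
  simp only [hevol τ hτ]
  linarith [mul_le_mul_of_nonneg_left hproduct (hσ.upper_constant_pos hc₁).le]

lemma weightedEnergy_le_add_mul (h : IsPerturbedFlow A B C K T U φ)
    (hf : IsConvexFluxOn A B m L f) (hσ : IsPseudoplastic p c₁ c₂ σ) (hp : p ≤ 1) (hc₁ : 0 < c₁)
    (hevol : ∀ τ ∈ Icc 0 T, ∀ x, deriv (fun s => φ s x) τ = evolution f σ (U τ) (φ τ) x)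
    (hr : 1 < r) (hsource : ∀ τ ∈ Icc 0 T, L2norm (deriv (deriv (U τ))) ≤ C * (1 + τ) ^ (-r))
    {R : ℝ} (hR : ∀ τ ∈ Icc 0 T, L2norm (φ τ) ≤ R) (ht : t ∈ Icc 0 T) :
    weightedEnergy p m (2 * (c₁ * (2 * (1 + C ^ 2)) ^ ((p - 1) / 2))) U φ t
      ≤ L2norm (φ 0) ^ 2 + 2 * c₂ * C * (r - 1)⁻¹ * R := by
  have hmem : ∀ {τ}, τ ∈ Icc 0 t → τ ∈ Icc 0 T := fun hτ => Icc_subset_Icc_right ht.2 hτ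
  have hprod := h.integrable_uncurry_mul_deriv_time hf hσ hp hc₁ hevol ht
  have hidentity := integral_sq_sub_integral_sq_eq h.contDiff_perturbation ht.1
    (fun τ hτ => (h.profile τ (hmem hτ)).memLp_perturbation.integrable_sq) hprod
  have hpower : IntervalIntegrable
      (fun τ => ∫ x, φ τ x * deriv (fun s => φ s x) τ) volume 0 t :=
    (intervalIntegrable_iff_integrableOn_Ioc_of_le ht.1).2 hprod.integral_prod_left
  have hweight := (intervalIntegrable_one_add_rpow (-r) ht.1).const_mul (2 * c₂ * C * R)
  have hsq := (h.intervalIntegrable_sq_mul_deriv ht).const_mul m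
  have hdiss := (h.intervalIntegrable_dissipation hp ht).const_mul
    (2 * (c₁ * (2 * (1 + C ^ 2)) ^ ((p - 1) / 2)))
  have hmono := integral_mono_on ht.1 (hpower.const_mul 2) ((hweight.sub hsq).sub hdiss)
    fun τ hτ => h.two_mul_integral_mul_deriv_time_le hf hσ hp hc₁ hevol hsource hR (hmem hτ)
  rw [← hidentity, intervalIntegral.integral_sub (hweight.sub hsq) hdiss,
    intervalIntegral.integral_sub hweight hsq, intervalIntegral.integral_const_mul,
    intervalIntegral.integral_const_mul, intervalIntegral.integral_const_mul,
    ← L2norm_sq, ← L2norm_sq] at hmono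
  have hC : 0 ≤ C := ((h.profile t ht).deriv_mem 0).1.trans ((h.profile t ht).deriv_mem 0).2
  have hR_nonneg : 0 ≤ R := (L2norm_nonneg _).trans (hR t ht)
  have hc₂ : 0 < c₂ := hσ.upper_constant_pos hc₁
  unfold weightedEnergy
  linarith [mul_le_mul_of_nonneg_left (integral_one_add_rpow_neg_le hr ht.1)
    (by positivity : 0 ≤ 2 * c₂ * C * R)]

lemma weightedEnergy_le_sq (h : IsPerturbedFlow A B C K T U φ) (hf : IsConvexFluxOn A B m L f)
    (hm : 0 ≤ m) (hσ : IsPseudoplastic p c₁ c₂ σ) (hp : p ≤ 1)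
    (hc₁ : 0 < c₁)
    (hevol : ∀ τ ∈ Icc 0 T, ∀ x, deriv (fun s => φ s x) τ = evolution f σ (U τ) (φ τ) x)
    (hr : 1 < r) (hsource : ∀ τ ∈ Icc 0 T, L2norm (deriv (deriv (U τ))) ≤ C * (1 + τ) ^ (-r))
    {M : ℝ} (hM : L2norm (φ 0) ≤ M) (ht : t ∈ Icc 0 T) :
    weightedEnergy p m (2 * (c₁ * (2 * (1 + C ^ 2)) ^ ((p - 1) / 2))) U φ t
      ≤ (M + 2 * c₂ * C * (r - 1)⁻¹) ^ 2 := by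
  have hC : 0 ≤ C := ((h.profile t ht).deriv_mem 0).1.trans ((h.profile t ht).deriv_mem 0).2
  have hc₂ : 0 < c₂ := hσ.upper_constant_pos hc₁
  have : 0 < r - 1 := sub_pos.2 hr
  refine le_sq_add_of_le_sq_add_mul ((L2norm_nonneg _).trans hM) (by positivity)
    (fun τ _ => L2norm_nonneg (φ τ)) ⟨√K, forall_mem_image.2 fun τ => h.L2norm_le_sqrt⟩
    (fun τ hτ => ?_) (fun R hR τ hτ => ?_) ht
  · exact h.L2norm_sq_le_weightedEnergy p hm (by positivity) hτ
  · linarith [h.weightedEnergy_le_add_mul hf hσ hp hc₁ hevol hr hsource hR hτ,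
      pow_le_pow_left₀ (L2norm_nonneg (φ 0)) hM 2]

end IsPerturbedFlow

end TimeIntegration

section Perturbation

/-- A solution `φ` of the perturbation equation around `U` on `[0, T] × ℝ` that is bounded, and
bounded in the Sobolev space `H²(ℝ)`, uniformly in time. -/
structure IsPerturbation (f σ : ℝ → ℝ) (U : ℝ → ℝ → ℝ) (T : ℝ) (φ : ℝ → ℝ → ℝ) : Prop where
  contDiff : ContDiff ℝ 2 (uncurry φ)
  perturbation_equation : ∀ t ∈ Icc 0 T, ∀ x, deriv (fun s => φ s x) t
    + deriv (fun y => f (U t y + φ t y) - f (U t y)) x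
    - deriv (fun y => σ (deriv (U t) y + deriv (φ t) y) - σ (deriv (U t) y)) x
      = deriv (fun y => σ (deriv (U t) y)) x
  bounded : ∃ N, ∀ t ∈ Icc 0 T, ∀ x, |φ t x| ≤ N
  integrable_sq : ∀ t ∈ Icc 0 T, Integrable fun x => φ t x ^ 2
  integrable_sq_deriv : ∀ t ∈ Icc 0 T, Integrable fun x => deriv (φ t) x ^ 2
  integrable_sq_deriv_deriv : ∀ t ∈ Icc 0 T, Integrable fun x => deriv (deriv (φ t)) x ^ 2
  sobolev_bounded : ∃ N, ∀ t ∈ Icc 0 T, (∫ x, φ t x ^ 2) + (∫ x, deriv (φ t) x ^ 2)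
    + (∫ x, deriv (deriv (φ t)) x ^ 2) ≤ N

lemma abs_le_of_L2norm_add_iSup_le {g : ℝ → ℝ} {M : ℝ} (hg : BddAbove (range fun x => |g x|))
    (hM : L2norm g + ⨆ x, |g x| ≤ M) (x : ℝ) : |g x| ≤ M := by
  linarith [le_ciSup hg x, L2norm_nonneg g]

lemma L2norm_le_of_L2norm_add_iSup_le {g : ℝ → ℝ} {M : ℝ} (hM : L2norm g + ⨆ x, |g x| ≤ M) :
    L2norm g ≤ M := by
  linarith [Real.iSup_nonneg fun x => abs_nonneg (g x)]

lemma exists_isConvexFluxOn {f : ℝ → ℝ} (hf : ContDiff ℝ 2 f)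
    (hconv : ∀ u, 0 < deriv (deriv f) u) (A B : ℝ) :
    ∃ m L, 0 < m ∧ IsConvexFluxOn A B m L f := by
  have hf₁ : ContDiff ℝ 1 (deriv f) := hf.deriv'
  have hcont := hf₁.continuous_deriv le_rfl
  obtain ⟨m, hm, hle⟩ := isCompact_Icc.exists_forall_le' (s := Icc A B) hcont.continuousOn
    fun u _ => hconv u
  obtain ⟨L₁, hL₁⟩ := isCompact_Icc.exists_bound_of_continuousOn (s := Icc A B)
    hf₁.continuous.continuousOn
  obtain ⟨L₂, hL₂⟩ := isCompact_Icc.exists_bound_of_continuousOn (s := Icc A B) hcont.continuousOn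
  exact ⟨m, max L₁ L₂, hm, hf, fun u hu => (hL₁ u hu).trans (le_max_left _ _), hle,
    fun u hu => (hL₂ u hu).trans (le_max_right _ _)⟩

lemma IsSmoothedRarefaction.of_decay {f : ℝ → ℝ} {um up C r : ℝ} {U : ℝ → ℝ → ℝ} (hr : 1 ≤ r)
    (hU : ContDiff ℝ 2 (uncurry U))
    (hlaw : ∀ t, 0 ≤ t → ∀ x, deriv (fun s => U s x) t + deriv (fun y => f (U t y)) x = 0)
    (hmem : ∀ t, 0 ≤ t → ∀ x, um < U t x ∧ U t x < up) (hpos : ∀ t, 0 ≤ t → ∀ x, 0 < deriv (U t) x)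
    (hfirst : ∀ t, 0 ≤ t → ∀ x, deriv (U t) x ≤ C * (1 + t)⁻¹)
    (hsecond : ∀ t, 0 ≤ t → ∀ x,
      L2norm (deriv (deriv (U t))) + |deriv (deriv (U t)) x| ≤ C * (1 + t) ^ (-r)) :
    IsSmoothedRarefaction f um up C r U := by
  have hC : 0 ≤ C := by simpa using (hpos 0 le_rfl 0).le.trans (hfirst 0 le_rfl 0)
  refine ⟨hU, hlaw, fun t ht x => ⟨(hmem t ht x).1.le, (hmem t ht x).2.le⟩, hpos,
    fun t ht x => (hfirst t ht x).trans ?_, fun t ht x => ?_,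
    fun t ht => (le_add_of_nonneg_right (abs_nonneg _)).trans (hsecond t ht 0)⟩
  · exact mul_le_of_le_one_right hC (inv_le_one_of_one_le₀ (by linarith))
  · refine ((le_add_of_nonneg_left (L2norm_nonneg _)).trans (hsecond t ht x)).trans
      (mul_le_mul_of_nonneg_left ?_ hC)
    rw [← Real.rpow_neg_one]
    exact Real.rpow_le_rpow_of_exponent_le (by linarith) (neg_le_neg hr)

namespace IsPerturbation

variable {f σ : ℝ → ℝ} {U φ : ℝ → ℝ → ℝ} {T um up C r p c₁ c₂ M : ℝ}

lemma deriv_time_eq_evolution (hφ : IsPerturbation f σ U T φ) (hU : ContDiff ℝ 2 (uncurry U))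
    (hf : Differentiable ℝ f) (hσ : Differentiable ℝ σ) {t : ℝ} (ht : t ∈ Icc 0 T) (x : ℝ) :
    deriv (fun s => φ s x) t = evolution f σ (U t) (φ t) x := by
  have hU₀ : ContDiff ℝ 2 (U t) := contDiff_slice_space hU t
  have hφ₀ : ContDiff ℝ 2 (φ t) := contDiff_slice_space hφ.contDiff t
  have hU₁ := (hU₀.differentiable (by simp) x).hasDerivAt
  have hφ₁ := (hφ₀.differentiable (by simp) x).hasDerivAt
  have hU₂ := (hU₀.differentiable_deriv_two x).hasDerivAt
  have hφ₂ := (hφ₀.differentiable_deriv_two x).hasDerivAt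
  have hconvection := (((hf _).hasDerivAt.comp x (hU₁.add hφ₁)).sub
    ((hf _).hasDerivAt.comp x hU₁)).deriv
  have hsource := (hσ _).hasDerivAt.comp x hU₂
  have hviscosity := (((hσ _).hasDerivAt.comp x (hU₂.add hφ₂)).sub hsource).deriv
  have heq := hφ.perturbation_equation t ht x
  rw [show deriv (fun y => f (U t y + φ t y) - f (U t y)) x = _ from hconvection,
    show deriv (fun y => σ (deriv (U t) y + deriv (φ t) y) - σ (deriv (U t) y)) x = _
      from hviscosity, show deriv (fun y => σ (deriv (U t) y)) x = _ from hsource.deriv] at heq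
  simp only [evolution, Pi.add_apply] at heq ⊢
  linarith

lemma deriv_time_sum_eq (hφ : IsPerturbation f σ U T φ) (hU : IsSmoothedRarefaction f um up C r U)
    (hf : Differentiable ℝ f) (hσ : Differentiable ℝ σ) {t : ℝ} (ht : t ∈ Icc 0 T) (x : ℝ) :
    deriv (fun s => U s x + φ s x) t
      = -deriv f (U t x + φ t x) * deriv (fun y => U t y + φ t y) x
        + deriv σ (deriv (U t) x + deriv (φ t) x)
          * deriv (deriv fun y => U t y + φ t y) x := by
  have hU₀ : ContDiff ℝ 2 (U t) := contDiff_slice_space hU.contDiff t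
  have hφ₀ : ContDiff ℝ 2 (φ t) := contDiff_slice_space hφ.contDiff t
  have hspace : deriv (fun y => U t y + φ t y) = fun y => deriv (U t) y + deriv (φ t) y :=
    funext fun y => deriv_fun_add (hU₀.differentiable (by simp) y) (hφ₀.differentiable (by simp) y)
  have hspace₂ := deriv_fun_add (hU₀.differentiable_deriv_two x) (hφ₀.differentiable_deriv_two x)
  have htime := deriv_fun_add
    ((contDiff_slice_time hU.contDiff x).differentiable (by simp) t)
    ((contDiff_slice_time hφ.contDiff x).differentiable (by simp) t)
  rw [htime, hspace, hspace₂, hU.deriv_time_eq hf ht.1,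
    hφ.deriv_time_eq_evolution hU.contDiff hf hσ ht, evolution]
  ring

lemma sum_mem_Icc (hφ : IsPerturbation f σ U T φ) (hU : IsSmoothedRarefaction f um up C r U)
    (hf : ContDiff ℝ 1 f) (hσ : IsPseudoplastic p c₁ c₂ σ) (hp : p ≤ 1) (hc₁ : 0 < c₁)
    (hM : ∀ x, |φ 0 x| ≤ M) {t : ℝ} (ht : t ∈ Icc 0 T) (x : ℝ) :
    U t x + φ t x ∈ Icc (um - M) (up + M) := by
  obtain ⟨N, hN⟩ := hφ.bounded
  have hbdd : ∀ t ∈ Icc 0 T, ∀ x, |U t x + φ t x| ≤ max |um| |up| + N := fun t ht x =>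
    (abs_add_le _ _).trans (add_le_add
      (abs_le_max_abs_abs (hU.mem_Icc t ht.1 x).1 (hU.mem_Icc t ht.1 x).2) (hN t ht x))
  obtain ⟨L, hL⟩ := isCompact_Icc.exists_bound_of_continuousOn
    (s := Icc (-(max |um| |up| + N)) (max |um| |up| + N)) (hf.continuous_deriv le_rfl).continuousOn
  refine mem_Icc_of_parabolic_solution (u := fun t x => U t x + φ t x)
    (a := fun t x => -deriv f (U t x + φ t x))
    (b := fun t x => deriv σ (deriv (U t) x + deriv (φ t) x)) (L := L) (c := c₂)
    (hU.contDiff.add hφ.contDiff) (fun t ht x => ?_) (fun _ _ _ => hσ.deriv_mem_Icc hp hc₁ _)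
    (fun t ht x => hφ.deriv_time_sum_eq hU (hf.differentiable (by simp))
      (hσ.contDiff.differentiable (by simp)) ht x) hbdd (fun x => ?_) t ht x
  · rw [abs_neg]
    exact hL _ (abs_le.1 (hbdd t ht x))
  · have hφ₀ := abs_le.1 (hM x)
    have hU₀ := hU.mem_Icc 0 le_rfl x
    exact ⟨by linarith [hU₀.1], by linarith [hU₀.2]⟩

lemma isPerturbedProfile (hφ : IsPerturbation f σ U T φ) (hU : IsSmoothedRarefaction f um up C r U)
    (hf : ContDiff ℝ 3 f) (hconv : ∀ u, 0 ≤ deriv (deriv f) u) (hσ : IsPseudoplastic p c₁ c₂ σ)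
    (hp : p ≤ 1) (hc₁ : 0 < c₁) (hM : ∀ x, |φ 0 x| ≤ M) {t : ℝ} (ht : t ∈ Icc 0 T) :
    IsPerturbedProfile (um - M) (up + M) C (U t) (φ t) where
  contDiff_background := contDiff_slice_space hU.contDiff t
  contDiff_perturbation := contDiff_slice_space hφ.contDiff t
  background_mem x := Icc_subset_Icc (sub_le_self _ ((abs_nonneg _).trans (hM 0)))
    (le_add_of_nonneg_right ((abs_nonneg _).trans (hM 0))) (hU.mem_Icc t ht.1 x)
  sum_mem := hφ.sum_mem_Icc hU (hf.of_le (by norm_num)) hσ hp hc₁ hM ht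
  deriv_mem x := ⟨(hU.deriv_pos t ht.1 x).le, hU.deriv_le t ht.1 x⟩
  integrable_density := ((hφ.integrable_sq t ht).add (hφ.integrable_sq_deriv t ht)).add
    (hφ.integrable_sq_deriv_deriv t ht) |>.add (hU.integrable_sq_deriv_deriv hf hconv ht.1)

lemma exists_isPerturbedFlow (hφ : IsPerturbation f σ U T φ)
    (hU : IsSmoothedRarefaction f um up C r U) (hr : 0 ≤ r)
    (hf : ContDiff ℝ 3 f) (hconv : ∀ u, 0 ≤ deriv (deriv f) u) (hσ : IsPseudoplastic p c₁ c₂ σ)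
    (hp : p ≤ 1) (hc₁ : 0 < c₁) (hM : ∀ x, |φ 0 x| ≤ M) :
    ∃ K, IsPerturbedFlow (um - M) (up + M) C K T U φ := by
  obtain ⟨N, hN⟩ := hφ.sobolev_bounded
  refine ⟨N + C ^ 2, hU.contDiff, hφ.contDiff,
    fun t ht => hφ.isPerturbedProfile hU hf hconv hσ hp hc₁ hM ht, fun t ht => ?_⟩
  have hC : 0 ≤ C := (hU.deriv_pos t ht.1 0).le.trans (hU.deriv_le t ht.1 0)
  have hnorm : L2norm (deriv (deriv (U t))) ≤ C := (hU.L2norm_deriv_deriv_le t ht.1).trans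
    (mul_le_of_le_one_right hC
      (Real.rpow_le_one_of_one_le_of_nonpos (by linarith [ht.1]) (by linarith)))
  have hsq := hφ.integrable_sq t ht
  have hsq₁ := hφ.integrable_sq_deriv t ht
  have hsq₂ := hφ.integrable_sq_deriv_deriv t ht
  calc ∫ x, regularityDensity (U t) (φ t) x
      = (∫ x, φ t x ^ 2) + (∫ x, deriv (φ t) x ^ 2) + (∫ x, deriv (deriv (φ t)) x ^ 2)
        + L2norm (deriv (deriv (U t))) ^ 2 := by
        rw [L2norm_sq, ← integral_add' hsq hsq₁, ← integral_add' (hsq.add hsq₁) hsq₂,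
          ← integral_add' ((hsq.add hsq₁).add hsq₂) (hU.integrable_sq_deriv_deriv hf hconv ht.1)]
        rfl
    _ ≤ N + C ^ 2 := add_le_add (hN t ht) (pow_le_pow_left₀ (L2norm_nonneg _) hnorm 2)

end IsPerturbation

end Perturbation

theorem basic_L2_energy_estimate_general {p c₁ c₂ um up C r M : ℝ} {f : ℝ → ℝ} (hp : p ≤ 1)
    (hc₁ : 0 < c₁) (hf : ContDiff ℝ 3 f) (hconv : ∀ u, 0 < deriv (deriv f) u) (hr : 1 < r) :
    ∃ C₀ : ℝ, 0 < C₀ ∧ ∀ σ, IsPseudoplastic p c₁ c₂ σ → ∀ U, IsSmoothedRarefaction f um up C r U →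
      ∀ T φ, IsPerturbation f σ U T φ → L2norm (φ 0) + (⨆ x, |φ 0 x|) ≤ M →
      ∀ t ∈ Icc 0 T, weightedEnergy p 1 1 U φ t ≤ C₀ := by
  obtain ⟨m, L, hm, hflux⟩ :=
    exists_isConvexFluxOn (hf.of_le (by norm_num)) hconv (um - M) (up + M)
  set β := 2 * (c₁ * (2 * (1 + C ^ 2)) ^ ((p - 1) / 2))
  have hβ : 0 < β := by positivity
  set S := (M + 2 * c₂ * C * (r - 1)⁻¹) ^ 2
  refine ⟨1 + (1 + m⁻¹ + β⁻¹) * S, by positivity, fun σ hσ U hU T φ hφ hinit t ht => ?_⟩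
  have hbdd : BddAbove (range fun x => |φ 0 x|) := by
    obtain ⟨N, hN⟩ := hφ.bounded
    exact ⟨N, forall_mem_range.2 (hN 0 ⟨le_rfl, ht.1.trans ht.2⟩)⟩
  obtain ⟨K, hflow⟩ := hφ.exists_isPerturbedFlow hU (zero_le_one.trans hr.le) hf
    (fun u => (hconv u).le) hσ hp hc₁ (abs_le_of_L2norm_add_iSup_le hbdd hinit)
  have henergy : weightedEnergy p m β U φ t ≤ S := hflow.weightedEnergy_le_sq hflux hm.le hσ hp hc₁
    (fun τ hτ => hφ.deriv_time_eq_evolution hU.contDiff (hf.differentiable (by simp))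
      (hσ.contDiff.differentiable (by simp)) hτ)
    hr (fun τ hτ => hU.L2norm_deriv_deriv_le τ hτ.1) (L2norm_le_of_L2norm_add_iSup_le hinit) ht
  calc weightedEnergy p 1 1 U φ t ≤ (1 + m⁻¹ + β⁻¹) * weightedEnergy p m β U φ t :=
        hflow.weightedEnergy_one_one_le p hm hβ ht
    _ ≤ (1 + m⁻¹ + β⁻¹) * S := mul_le_mul_of_nonneg_left henergy (by positivity)
    _ ≤ 1 + (1 + m⁻¹ + β⁻¹) * S := le_add_of_nonneg_left zero_le_one

/-- Proposition 4.1 (basic `L²` energy estimate): in the setting of the pseudo-plastic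
viscous conservation law with smoothed rarefaction wave `U` and perturbation `φ`, for
every `M > 0` there is `C₀ > 0`, depending only on `p, c₁, c₂, CU, um, up, f, M` (not on
`σ`, `U`, `T`, `φ`), such that if `‖φ(0)‖_{L²} + sup|φ(0)| ≤ M` then for all `t ∈ [0,T]`,
`‖φ(t)‖²_{L²} + ∫₀^t ∫ φ² ∂ₓU + ∫₀^t ∫ (1+(∂ₓφ)²)^((p-1)/2) (∂ₓφ)² ≤ C₀`. -/
theorem basic_L2_energy_estimate
    (p c₁ c₂ : ℝ) (hp0 : 0 < p) (hp1 : p < 1) (hc1 : 0 < c₁) (hc12 : c₁ ≤ c₂)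
    (f : ℝ → ℝ) (hf : ContDiff ℝ (⊤ : ℕ∞) f) (hconv : ∀ u : ℝ, 0 < deriv (deriv f) u)
    (um up CU : ℝ) (hu : um < up) (hCU : 0 < CU)
    (M : ℝ) (hM : 0 < M) :
    ∃ C₀ : ℝ, 0 < C₀ ∧
      ∀ σ : ℝ → ℝ, ContDiff ℝ (⊤ : ℕ∞) σ → σ 0 = 0 →
      (∀ v : ℝ, c₁ * (1 + v ^ 2) ^ ((p - 1) / 2) ≤ deriv σ v ∧
        deriv σ v ≤ c₂ * (1 + v ^ 2) ^ ((p - 1) / 2)) →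
      ∀ U : ℝ → ℝ → ℝ, ContDiff ℝ (⊤ : ℕ∞) (fun q : ℝ × ℝ => U q.1 q.2) →
      (∀ t : ℝ, 0 ≤ t → ∀ x : ℝ,
        deriv (fun s => U s x) t + deriv (fun y => f (U t y)) x = 0) →
      (∀ t : ℝ, 0 ≤ t → ∀ x : ℝ, um < U t x ∧ U t x < up) →
      (∀ t : ℝ, 0 ≤ t → ∀ x : ℝ, 0 < deriv (U t) x) →
      (∀ t : ℝ, 0 ≤ t → ∀ x : ℝ, deriv (U t) x ≤ CU * (1 + t)⁻¹) →
      (∀ t : ℝ, 0 ≤ t → L2norm (deriv (U t)) ≤ CU * (1 + t) ^ (-(1 : ℝ) / 2)) →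
      (∀ t : ℝ, 0 ≤ t → (∫ x : ℝ, |deriv (deriv (U t)) x|) ≤ CU * (1 + t)⁻¹) →
      (∀ t : ℝ, 0 ≤ t → ∀ x : ℝ,
        L2norm (deriv (deriv (U t))) + |deriv (deriv (U t)) x|
          ≤ CU * (1 + t) ^ (-(9 : ℝ) / 8)) →
      (∀ t : ℝ, 0 ≤ t →
        L2norm (deriv (deriv (deriv (U t)))) ≤ CU * (1 + t) ^ (-(9 : ℝ) / 8)) →
      (∀ t : ℝ, 0 ≤ t → ∀ x : ℝ,
        L2norm (fun y => deriv (fun s => deriv (U s) y) t)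
          + |deriv (fun s => deriv (U s) x) t| ≤ CU * (1 + t)⁻¹) →
      ∀ T : ℝ, 0 < T →
      ∀ φ : ℝ → ℝ → ℝ, ContDiff ℝ (⊤ : ℕ∞) (fun q : ℝ × ℝ => φ q.1 q.2) →
      (∀ t ∈ Icc (0 : ℝ) T, ∀ x : ℝ,
        deriv (fun s => φ s x) t
          + deriv (fun y => f (U t y + φ t y) - f (U t y)) x
          - deriv (fun y => σ (deriv (U t) y + deriv (φ t) y) - σ (deriv (U t) y)) x
        = deriv (fun y => σ (deriv (U t) y)) x) →
      (∃ B : ℝ, ∀ t ∈ Icc (0 : ℝ) T, ∀ x : ℝ,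
        |φ t x| + |deriv (φ t) x| + |deriv (deriv (φ t)) x|
          + |deriv (deriv (deriv (φ t))) x| + |deriv (fun s => deriv (φ s) x) t| ≤ B) →
      (∀ t ∈ Icc (0 : ℝ) T,
        Integrable (fun x : ℝ => (φ t x) ^ 2) ∧
        Integrable (fun x : ℝ => (deriv (φ t) x) ^ 2) ∧
        Integrable (fun x : ℝ => (deriv (deriv (φ t)) x) ^ 2) ∧
        Integrable (fun x : ℝ => (deriv (deriv (deriv (φ t))) x) ^ 2) ∧
        Integrable (fun x : ℝ => (deriv (fun s => deriv (φ s) x) t) ^ 2)) →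
      (∃ B : ℝ, ∀ t ∈ Icc (0 : ℝ) T,
        (∫ x : ℝ, (φ t x) ^ 2) + (∫ x : ℝ, (deriv (φ t) x) ^ 2)
          + (∫ x : ℝ, (deriv (deriv (φ t)) x) ^ 2)
          + (∫ x : ℝ, (deriv (deriv (deriv (φ t))) x) ^ 2)
          + (∫ x : ℝ, (deriv (fun s => deriv (φ s) x) t) ^ 2) ≤ B) →
      (∀ t ∈ Icc (0 : ℝ) T,
        Tendsto (φ t) atTop (nhds 0) ∧ Tendsto (φ t) atBot (nhds 0) ∧
        Tendsto (deriv (φ t)) atTop (nhds 0) ∧ Tendsto (deriv (φ t)) atBot (nhds 0) ∧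
        Tendsto (deriv (deriv (φ t))) atTop (nhds 0) ∧
        Tendsto (deriv (deriv (φ t))) atBot (nhds 0)) →
      L2norm (φ 0) + (⨆ x : ℝ, |φ 0 x|) ≤ M →
      ∀ t ∈ Icc (0 : ℝ) T,
        (∫ x : ℝ, (φ t x) ^ 2)
          + (∫ τ in (0:ℝ)..t, ∫ x : ℝ, (φ τ x) ^ 2 * deriv (U τ) x)
          + (∫ τ in (0:ℝ)..t, ∫ x : ℝ,
              (1 + (deriv (φ τ) x) ^ 2) ^ ((p - 1) / 2) * (deriv (φ τ) x) ^ 2)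
        ≤ C₀ := by
  obtain ⟨C₀, hC₀, hbound⟩ := basic_L2_energy_estimate_general (c₂ := c₂) (um := um) (up := up)
    (C := CU) (r := 9 / 8) (M := M) hp1.le hc1 (contDiff_infty.1 hf 3) hconv (by norm_num)
  refine ⟨C₀, hC₀, fun σ hσ _ hslope U hU hlaw hmem hpos hfirst _ _ hsecond _ _ T _ φ hφ heq
    ⟨N, hN⟩ hintegrable ⟨K, hK⟩ _ hinit t ht => ?_⟩
  have hpseudoplastic : IsPseudoplastic p c₁ c₂ σ :=
    ⟨contDiff_infty.1 hσ 1, fun v => (hslope v).1, fun v => (hslope v).2⟩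
  have hrarefaction : IsSmoothedRarefaction f um up CU (9 / 8) U :=
    .of_decay (by norm_num) (contDiff_infty.1 hU 2) hlaw hmem hpos hfirst
      fun t ht x => neg_div 8 (9 : ℝ) ▸ hsecond t ht x
  have hbounded : ∀ t ∈ Icc 0 T, ∀ x, |φ t x| ≤ N := fun t ht x => by
    refine le_trans ?_ (hN t ht x)
    simp only [add_assoc]
    exact le_add_of_nonneg_right (by positivity)
  have hperturbation : IsPerturbation f σ U T φ :=
    ⟨contDiff_infty.1 hφ 2, heq, ⟨N, hbounded⟩, fun t ht => (hintegrable t ht).1,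
      fun t ht => (hintegrable t ht).2.1, fun t ht => (hintegrable t ht).2.2.1, ⟨K, fun t ht =>
        le_of_add_le_of_nonneg_left
          (le_of_add_le_of_nonneg_left (hK t ht) (by positivity)) (by positivity)⟩⟩
  simpa only [weightedEnergy, L2norm_sq, dissipation, one_mul] using
    hbound σ hpseudoplastic U hrarefaction T φ hperturbation hinit t ht
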